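/- arXiv:1007.1771 — 3 statements merged into one kernel-verified Lean document; each statement's English description precedes it below -/
import Mathlib

section
/- Assume the strengthened restricted eigenvalue condition: there exists κ = κ(s) > 0 such that ‖XΔ‖ ≥ κ·√N·‖Δ_J‖ for every J ⊆ {1,…,M} with |J| ≤ s and every Δ ∈ ℝ^K∖{0} with Σ_{j∉J} λ_j‖Δ^j‖ ≤ 7·Σ_{j∈J} λ_j‖Δ^j‖. Then with probability at least 1 − 2M^{1−q}, every Group Lasso solution β̂ satisfies the bias-including oracle inequality (1/N)‖X(β̂ − β*)‖² ≤ min{ (96/κ²)·Σ_{j∈J(β)} λ_j² + (2/N)‖X(β − β*)‖² : β ∈ ℝ^K, M(β) ≤ s }. -/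
/-!
The proof separates a deterministic inequality from a Gaussian tail bound.

On the event that `‖X_{G_j}ᵀ W‖ / N ≤ λ_j / 2` for every group `j`, comparing the objective at the
minimizer `b` with its value at `β`, and applying Cauchy–Schwarz group by group to the noise term,
gives (`basic_inequality`), with `J = J(β)`,
`‖X(b - β*)‖² / N + ∑_j λ_j ‖(b - β)^j‖ ≤ ‖X(β - β*)‖² / N + 4 ∑_{j ∈ J} λ_j ‖(b - β)^j‖`.
Either the bias `‖X(β - β*)‖² / N` exceeds the last sum and the claim is immediate, or `b - β` lies
in the cone with constant `7`. In the latter case the restricted eigenvalue condition bounds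
`‖(b - β)_J‖` by `‖X(b - β)‖ / (κ √N)`; the triangle inequality through `β*` and Young's inequality
then finish the argument (`deterministic_oracle`).

For the probability of the event, `X_{G_j} X_{G_j}ᵀ` is diagonalized and the rotation invariance
of the standard Gaussian measure turns `‖X_{G_j}ᵀ W‖²` into a weighted sum of independent `χ²₁`
variables (`gaussian_quadratic_tail`). Its weights are at most `N ⦀Ψ_j⦀`, and the sum of their
squares is at most `K_j (N ⦀Ψ_j⦀)²`, so Chernoff's bound (`weighted_chiSq_tail`) at level
`x = q log M` yields failure probability at most `M ^ (-q)` for each group. A union bound over the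
groups gives `M ^ (1 - q)`.
-/

open MeasureTheory ProbabilityTheory Finset

noncomputable section

namespace GroupLasso

/-- The index set `{1,…,K}` partitioned into `M` groups, the `j`-th of size `Kj j`. -/
abbrev GIdx {M : ℕ} (Kj : Fin M → ℕ) : Type := (j : Fin M) × Fin (Kj j)

/-- Euclidean norm `‖β^j‖` of the `j`-th group of coefficients. -/
def gnorm {M : ℕ} {Kj : Fin M → ℕ} (β : GIdx Kj → ℝ) (j : Fin M) : ℝ :=
  Real.sqrt (∑ t, (β ⟨j, t⟩) ^ 2)

/-- Trace of `Ψ_j = X_{G_j}ᵀ X_{G_j} / N`. -/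
def trPsi {N M : ℕ} {Kj : Fin M → ℕ} (X : Matrix (Fin N) (GIdx Kj) ℝ) (j : Fin M) : ℝ :=
  (∑ t, ∑ i, (X i ⟨j, t⟩) ^ 2) / N

/-- Spectral norm of the positive semidefinite matrix `Ψ_j = X_{G_j}ᵀ X_{G_j} / N`,
expressed as the supremum of its quadratic form over unit vectors supported on group `j`. -/
def specPsi {N M : ℕ} {Kj : Fin M → ℕ} (X : Matrix (Fin N) (GIdx Kj) ℝ) (j : Fin M) : ℝ :=
  sSup {x | ∃ v : GIdx Kj → ℝ, (∀ k : GIdx Kj, k.1 ≠ j → v k = 0) ∧ (∑ k, (v k) ^ 2 = 1) ∧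
    x = (∑ i, (∑ k, X i k * v k) ^ 2) / N}

/-- The Group Lasso objective `(1/N)‖Xβ − y‖² + 2 Σ_j λ_j ‖β^j‖`. -/
def glObj {N M : ℕ} {Kj : Fin M → ℕ} (X : Matrix (Fin N) (GIdx Kj) ℝ) (y : Fin N → ℝ)
    (lam : Fin M → ℝ) (β : GIdx Kj → ℝ) : ℝ :=
  (∑ i, (X.mulVec β i - y i) ^ 2) / N + 2 * ∑ j, lam j * gnorm β j

/-- `b` is a Group Lasso solution. -/
def IsGLSol {N M : ℕ} {Kj : Fin M → ℕ} (X : Matrix (Fin N) (GIdx Kj) ℝ) (y : Fin N → ℝ)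
    (lam : Fin M → ℝ) (b : GIdx Kj → ℝ) : Prop :=
  ∀ β : GIdx Kj → ℝ, glObj X y lam b ≤ glObj X y lam β

/-! ### Tail of a weighted sum of chi-squares -/

theorem integral_exp_mul_sq_gaussian {s : ℝ} (hs : 2 * s < 1) :
    ∫ z, Real.exp (s * z ^ 2) ∂gaussianReal 0 1 = Real.sqrt (1 / (1 - 2 * s)) := by
  rw [integral_gaussianReal_eq_integral_smul one_ne_zero]
  have h : ∀ z : ℝ, gaussianPDFReal 0 1 z • Real.exp (s * z ^ 2) =
      (Real.sqrt (2 * Real.pi))⁻¹ * Real.exp (-(1 / 2 - s) * z ^ 2) := by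
    intro z
    simp only [gaussianPDFReal, NNReal.coe_one, mul_one, sub_zero, smul_eq_mul]
    rw [mul_assoc, ← Real.exp_add]
    ring_nf
  simp_rw [h]
  rw [integral_const_mul, integral_gaussian, ← Real.sqrt_inv, ← Real.sqrt_mul (by positivity)]
  congr 1
  have : 1 / 2 - s ≠ 0 := by intro h; linarith
  have : 1 - 2 * s ≠ 0 := by intro h; linarith
  have := Real.pi_ne_zero
  field_simp

theorem integrable_exp_mul_sq_gaussian {s : ℝ} (hs : 2 * s < 1) :
    Integrable (fun z => Real.exp (s * z ^ 2)) (gaussianReal 0 1) := by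
  apply Integrable.of_integral_ne_zero
  rw [integral_exp_mul_sq_gaussian hs]
  have : 0 < 1 - 2 * s := by linarith
  positivity

/-- The sub-gamma estimate `-log (1 - 2 s) / 2 ≤ s + s ^ 2 / (1 - 2 s)`, which amounts to
`u ≤ sinh u` at `u = -log (1 - 2 s)`. -/
theorem sqrt_le_exp_subgamma {s : ℝ} (hs0 : 0 ≤ s) (hs : 2 * s < 1) :
    Real.sqrt (1 / (1 - 2 * s)) ≤ Real.exp (s + s ^ 2 / (1 - 2 * s)) := by
  have hw : 0 < 1 - 2 * s := by linarith
  have hlog : 0 ≤ Real.log (1 / (1 - 2 * s)) :=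
    Real.log_nonneg (by rw [le_div_iff₀ hw]; linarith)
  have h := Real.self_le_sinh_iff.2 hlog
  rw [Real.sinh_log (by positivity)] at h
  have h2 : Real.log (Real.sqrt (1 / (1 - 2 * s))) ≤ s + s ^ 2 / (1 - 2 * s) := by
    rw [Real.log_sqrt (by positivity)]
    have e : s + s ^ 2 / (1 - 2 * s) = (1 / (1 - 2 * s) - (1 / (1 - 2 * s))⁻¹) / 2 / 2 := by
      obtain ⟨w, rfl⟩ : ∃ w, s = (1 - w) / 2 := ⟨1 - 2 * s, by ring⟩
      have hne : w ≠ 0 := by intro h; simp [h] at hw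
      rw [show 1 - 2 * ((1 - w) / 2) = w by ring]
      field_simp
      ring
    rw [e]
    linarith
  calc _ = Real.exp (Real.log (Real.sqrt (1 / (1 - 2 * s)))) := (Real.exp_log (by positivity)).symm
    _ ≤ _ := Real.exp_le_exp.2 h2

/-- A Laurent–Massart tail bound for a weighted sum of independent `χ²₁` variables. -/
theorem weighted_chiSq_tail {n : ℕ} (v : Fin n → ℝ) {L k x : ℝ} (hL : 0 < L) (hk : 0 < k)
    (hx : 0 < x) (hv0 : ∀ i, 0 ≤ v i) (hvL : ∀ i, v i ≤ L) (hv2 : ∑ i, v i ^ 2 ≤ k * L ^ 2) :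
    (Measure.pi fun _ : Fin n => gaussianReal 0 1).real
      {z | ∑ i, v i + 2 * L * (2 * x + Real.sqrt (k * x)) ≤ ∑ i, v i * z i ^ 2} ≤
      Real.exp (-x) := by
  obtain ⟨a, ha, hak⟩ : ∃ a : ℝ, 0 < a ∧ a ^ 2 = k := ⟨√k, by positivity, Real.sq_sqrt hk.le⟩
  obtain ⟨y, hy, hyx⟩ : ∃ y : ℝ, 0 < y ∧ y ^ 2 = x := ⟨√x, by positivity, Real.sq_sqrt hx.le⟩
  have hkx : Real.sqrt (k * x) = a * y := by
    rw [← hak, ← hyx, ← mul_pow, Real.sqrt_sq (by positivity)]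
  -- the Laurent–Massart choice of the Chernoff parameter
  set t : ℝ := y / (a + 2 * y) / L with ht
  have ht0 : 0 < t := by positivity
  have htL : t * L = y / (a + 2 * y) := by rw [ht]; field_simp
  have hw : 1 - 2 * (t * L) = a / (a + 2 * y) := by rw [htL]; field_simp; ring
  have hw0 : 0 < 1 - 2 * (t * L) := by rw [hw]; positivity
  have hle : ∀ i, t * v i ≤ t * L := fun i => mul_le_mul_of_nonneg_left (hvL i) ht0.le
  have hlt : ∀ i, 2 * (t * v i) < 1 := fun i => by linarith [hle i]
  have hprod : ∀ z : Fin n → ℝ, Real.exp (t * ∑ i, v i * z i ^ 2) =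
      ∏ i, Real.exp (t * v i * z i ^ 2) := by
    intro z
    rw [← Real.exp_sum, mul_sum]
    simp_rw [mul_assoc]
  have hint : Integrable (fun z : Fin n → ℝ => Real.exp (t * ∑ i, v i * z i ^ 2))
      (Measure.pi fun _ : Fin n => gaussianReal 0 1) := by
    simp_rw [hprod]
    exact Integrable.fintype_prod (f := fun i z => Real.exp (t * v i * z ^ 2))
      fun i => integrable_exp_mul_sq_gaussian (hlt i)
  refine (measure_ge_le_exp_mul_mgf _ ht0.le hint).trans ?_
  have hmgf : mgf (fun z : Fin n → ℝ => ∑ i, v i * z i ^ 2)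
      (Measure.pi fun _ : Fin n => gaussianReal 0 1) t ≤
      Real.exp (∑ i, (t * v i + (t * v i) ^ 2 / (1 - 2 * (t * L)))) := by
    rw [mgf]
    simp_rw [hprod]
    rw [integral_fintype_prod_eq_prod (fun i z => Real.exp (t * v i * z ^ 2)), Real.exp_sum]
    refine prod_le_prod (fun i _ => integral_nonneg fun _ => (Real.exp_pos _).le) fun i _ => ?_
    rw [integral_exp_mul_sq_gaussian (hlt i)]
    refine (sqrt_le_exp_subgamma (mul_nonneg ht0.le (hv0 i)) (hlt i)).trans ?_
    gcongr
    exact hvL i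
  refine (mul_le_mul_of_nonneg_left hmgf (Real.exp_pos _).le).trans ?_
  rw [← Real.exp_add]
  apply Real.exp_le_exp.2
  rw [sum_add_distrib, ← mul_sum, ← sum_div]
  simp_rw [mul_pow]
  rw [← mul_sum]
  have h1 : t ^ 2 * (∑ i, v i ^ 2) ≤ (t * L) ^ 2 * k := by
    nlinarith [mul_le_mul_of_nonneg_left hv2 (sq_nonneg t)]
  have h2 : t ^ 2 * (∑ i, v i ^ 2) / (1 - 2 * (t * L)) ≤ x * (a / (a + 2 * y)) := by
    rw [div_le_iff₀ hw0]
    refine h1.trans (le_of_eq ?_)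
    rw [hw, htL, ← hyx, ← hak]
    field_simp
  have h3 : a / (a + 2 * y) ≤ 1 := by rw [div_le_one (by positivity)]; linarith
  have h4 : t * (2 * L * (2 * x + Real.sqrt (k * x))) = 2 * x := by
    rw [hkx, ht, ← hyx]
    field_simp
    ring
  nlinarith [mul_le_mul_of_nonneg_left h3 hx.le]

/-! ### Gaussian quadratic forms -/

/-- Change of variables: the standard Gaussian measure on `ℝⁿ` expressed in an orthonormal
basis `b`. -/
theorem pi_gaussian_preimage_basis {n : ℕ}
    (b : OrthonormalBasis (Fin n) ℝ (EuclideanSpace ℝ (Fin n))) {B : Set (Fin n → ℝ)}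
    (hB : MeasurableSet B) :
    (Measure.pi fun _ : Fin n => gaussianReal 0 1) B =
      (Measure.pi fun _ : Fin n => gaussianReal 0 1)
        {z | (fun i => (∑ l, z l • b l) i) ∈ B} := by
  have h1 := map_pi_eq_stdGaussian (ι := Fin n)
  rw [stdGaussian_eq_map_pi_orthonormalBasis b] at h1
  have hC : MeasurableSet ((fun w : EuclideanSpace ℝ (Fin n) => (w : Fin n → ℝ)) ⁻¹' B) :=
    (by fun_prop : Measurable fun w : EuclideanSpace ℝ (Fin n) => (w : Fin n → ℝ)) hB
  have h2 := congrArg (fun m => m ((fun w : EuclideanSpace ℝ (Fin n) => (w : Fin n → ℝ)) ⁻¹' B)) h1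
  simp only at h2
  rw [Measure.map_apply (by fun_prop) hC, Measure.map_apply (by fun_prop) hC] at h2
  exact h2

/-- Tail bound for `‖Aᵀz‖²` with `z` standard Gaussian, obtained by diagonalizing `A Aᵀ`;
`L` bounds the square of the spectral norm of `A`. -/
theorem gaussian_quadratic_tail {n k : ℕ} (hk : 1 ≤ k) (A : Matrix (Fin n) (Fin k) ℝ)
    {L x : ℝ} (hL : 0 < L) (hx : 0 < x)
    (hA : ∀ w : Fin k → ℝ, ∑ i, (∑ t, A i t * w t) ^ 2 ≤ L * ∑ t, w t ^ 2) :
    (Measure.pi fun _ : Fin n => gaussianReal 0 1).real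
      {z | ∑ t, ∑ i, A i t ^ 2 + 2 * L * (2 * x + Real.sqrt (k * x)) ≤
        ∑ t, (∑ i, A i t * z i) ^ 2} ≤ Real.exp (-x) := by
  have hS : (A * A.transpose).IsHermitian := by
    simpa using Matrix.isHermitian_mul_conjTranspose_self A
  set b := hS.eigenvectorBasis with hb
  set v := hS.eigenvalues with hv
  have heig : ∀ l i, ∑ t, A i t * ∑ i', A i' t * b l i' = v l * b l i := by
    intro l i
    have h := congrFun (hS.mulVec_eigenvectorBasis l) i
    rw [← Matrix.mulVec_mulVec] at h
    simpa [Matrix.mulVec, dotProduct] using h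
  have horth : ∀ l m, ∑ i, b l i * b m i = if l = m then 1 else 0 := by
    intro l m
    have h := orthonormal_iff_ite.1 b.orthonormal l m
    rw [← h]
    simp [PiLp.inner_apply, mul_comm]
  -- `Aᵀ` maps the eigenbasis to an orthogonal family
  have hquad : ∀ l m, ∑ t, (∑ i, A i t * b l i) * (∑ i, A i t * b m i) =
      if l = m then v l else 0 := by
    intro l m
    have : ∑ t, (∑ i, A i t * b l i) * (∑ i, A i t * b m i) =
        ∑ i, b l i * ∑ t, A i t * ∑ i', A i' t * b m i' := by
      simp_rw [sum_mul, mul_sum (s := univ (α := Fin k))]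
      rw [sum_comm]
      refine sum_congr rfl fun i _ => sum_congr rfl fun t _ => by ring
    rw [this]
    simp_rw [heig]
    have : ∑ i, b l i * (v m * b m i) = v m * ∑ i, b l i * b m i := by
      rw [mul_sum]; refine sum_congr rfl fun i _ => by ring
    rw [this, horth]
    split_ifs with h
    · simp [h]
    · simp
  have hvsq : ∀ l, v l = ∑ t, (∑ i, A i t * b l i) ^ 2 := by
    intro l
    have := hquad l l
    simp only [if_true] at this
    simp_rw [sq]
    exact this.symm
  have hv0 : ∀ l, 0 ≤ v l := fun l => by rw [hvsq]; positivity
  have hv2 : ∀ l, v l ^ 2 ≤ L * v l := by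
    intro l
    have h := hA fun t => ∑ i, A i t * b l i
    rw [← hvsq] at h
    simp_rw [heig, mul_pow] at h
    rw [← mul_sum] at h
    have h1 := horth l l
    simp only [if_true, ← sq] at h1
    rwa [h1, mul_one] at h
  have hvL : ∀ l, v l ≤ L := by
    intro l
    by_contra! hc
    nlinarith [hv2 l]
  have htr : ∑ l, v l = ∑ t, ∑ i, A i t ^ 2 := by
    have h := hS.trace_eq_sum_eigenvalues
    rw [sum_comm]
    simp only [Matrix.trace, Matrix.diag, Matrix.mul_apply, Matrix.transpose_apply, ← sq] at h
    simpa using h.symm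
  have hcol : ∀ t, ∑ i, A i t ^ 2 ≤ L := by
    intro t
    simpa [Pi.single_apply] using hA (Pi.single t 1)
  have hsum2 : ∑ l, v l ^ 2 ≤ k * L ^ 2 := by
    calc ∑ l, v l ^ 2 ≤ ∑ l, L * v l := sum_le_sum fun l _ => hv2 l
      _ = L * ∑ t, ∑ i, A i t ^ 2 := by rw [← mul_sum, htr]
      _ ≤ L * ∑ _t : Fin k, L := by gcongr; exact hcol _
      _ = _ := by simp; ring
  have hmain := weighted_chiSq_tail v hL (by exact_mod_cast hk : (0 : ℝ) < k) hx hv0 hvL hsum2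
  have hmeas : MeasurableSet {z : Fin n → ℝ |
      ∑ t, ∑ i, A i t ^ 2 + 2 * L * (2 * x + Real.sqrt (k * x)) ≤
        ∑ t, (∑ i, A i t * z i) ^ 2} :=
    measurableSet_le measurable_const (by fun_prop)
  rw [Measure.real, pi_gaussian_preimage_basis b hmeas]
  refine le_trans (le_of_eq ?_) hmain
  rw [Measure.real]
  congr 2
  ext z
  simp only [Set.mem_ofPred_eq, htr]
  have hkey : ∑ t, (∑ i, A i t * (∑ l, z l • b l) i) ^ 2 = ∑ l, v l * z l ^ 2 := by
    have h1 : ∀ t, ∑ i, A i t * (∑ l, z l • b l) i = ∑ l, z l * ∑ i, A i t * b l i := by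
      intro t
      simp only [WithLp.ofLp_sum, WithLp.ofLp_smul, Finset.sum_apply, Pi.smul_apply, smul_eq_mul,
        mul_sum]
      rw [sum_comm]
      refine sum_congr rfl fun i _ => sum_congr rfl fun l _ => by ring
    simp_rw [h1, sq (∑ l, _), sum_mul_sum]
    rw [sum_comm]
    refine sum_congr rfl fun l _ => ?_
    rw [sum_comm]
    have h2 : ∀ m, ∑ t, z l * (∑ i, A i t * b l i) * (z m * ∑ i, A i t * b m i) =
        z l * z m * if l = m then v l else 0 := by
      intro m
      rw [← hquad, mul_sum]
      refine sum_congr rfl fun t _ => by ring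
    simp_rw [h2]
    simp
    ring
  rw [hkey]

/-! ### Noise correlated with one group -/

theorem trPsi_nonneg {N M : ℕ} {Kj : Fin M → ℕ} (X : Matrix (Fin N) (GIdx Kj) ℝ) (j : Fin M) :
    0 ≤ trPsi X j := by
  unfold trPsi; positivity

theorem specPsi_nonneg {N M : ℕ} {Kj : Fin M → ℕ} (X : Matrix (Fin N) (GIdx Kj) ℝ) (j : Fin M) :
    0 ≤ specPsi X j := by
  apply Real.sSup_nonneg
  rintro x ⟨v, -, -, rfl⟩
  positivity

/-- The supremum defining `specPsi` is finite, so it does bound the quadratic form of `Ψ_j`. -/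
theorem group_quad_le_specPsi {N M : ℕ} {Kj : Fin M → ℕ} (hN : 1 ≤ N)
    (X : Matrix (Fin N) (GIdx Kj) ℝ) (j : Fin M) (w : Fin (Kj j) → ℝ) :
    ∑ i, (∑ t, X i ⟨j, t⟩ * w t) ^ 2 ≤ N * specPsi X j * ∑ t, w t ^ 2 := by
  have hN0 : (0 : ℝ) < N := by exact_mod_cast hN
  have hr0 : 0 ≤ ∑ t, w t ^ 2 := by positivity
  rcases hr0.eq_or_lt with h0 | hr
  · have hw : ∀ t, w t = 0 := fun t => by
      simpa using (sum_eq_zero_iff_of_nonneg fun t _ => sq_nonneg (w t)).1 h0.symm t (mem_univ t)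
    simp [hw]
  set r := Real.sqrt (∑ t, w t ^ 2) with hrdef
  have hr' : 0 < r := Real.sqrt_pos.2 hr
  have hr2 : r ^ 2 = ∑ t, w t ^ 2 := Real.sq_sqrt hr0
  let v : GIdx Kj → ℝ := fun k => if h : k.1 = j then w (h ▸ k.2) / r else 0
  have hvj : ∀ t, v ⟨j, t⟩ = w t / r := fun t => by simp [v]
  have hvl : ∀ l, l ≠ j → ∀ t, v ⟨l, t⟩ = 0 := fun l hl t => by simp [v, hl]
  have hsum : ∀ f : GIdx Kj → ℝ, (∀ l, l ≠ j → ∀ t, f ⟨l, t⟩ = 0) →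
      ∑ k, f k = ∑ t, f ⟨j, t⟩ := by
    intro f hf
    rw [Fintype.sum_sigma, Fintype.sum_eq_single j]
    intro l hl
    exact sum_eq_zero fun t _ => hf l hl t
  have hbdd : BddAbove {x | ∃ v : GIdx Kj → ℝ, (∀ k : GIdx Kj, k.1 ≠ j → v k = 0) ∧
      (∑ k, (v k) ^ 2 = 1) ∧ x = (∑ i, (∑ k, X i k * v k) ^ 2) / N} := by
    refine ⟨(∑ i, ∑ k, X i k ^ 2) / N, ?_⟩
    rintro x ⟨u, -, hu, rfl⟩
    gcongr with i
    have := sum_mul_sq_le_sq_mul_sq univ (fun k => X i k) u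
    rwa [hu, mul_one] at this
  have hmem : (∑ i, (∑ k, X i k * v k) ^ 2) / N ≤ specPsi X j := by
    refine le_csSup hbdd ⟨v, fun k hk => hvl k.1 hk k.2, ?_, rfl⟩
    rw [hsum _ fun l hl t => by simp [hvl l hl t]]
    simp_rw [hvj, div_pow]
    rw [← sum_div, hr2, div_self hr.ne']
  have hX : ∀ i, ∑ k, X i k * v k = (∑ t, X i ⟨j, t⟩ * w t) / r := by
    intro i
    rw [hsum _ fun l hl t => by simp [hvl l hl t]]
    simp_rw [hvj, mul_div_assoc']
    rw [← sum_div]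
  simp_rw [hX, div_pow] at hmem
  rw [← sum_div, hr2, div_div, div_le_iff₀ (by positivity)] at hmem
  linarith

theorem pi_gaussian_eq_map_smul {n : ℕ} {σ : ℝ} :
    (Measure.pi fun _ : Fin n => gaussianReal 0 (σ ^ 2).toNNReal) =
      Measure.map (fun z i => σ * z i) (Measure.pi fun _ : Fin n => gaussianReal 0 1) := by
  have h : gaussianReal 0 (σ ^ 2).toNNReal = Measure.map (fun x => σ * x) (gaussianReal 0 1) := by
    rw [gaussianReal_map_const_mul, mul_zero, mul_one]
    congr 1
    exact Real.toNNReal_of_nonneg (sq_nonneg σ)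
  have : IsProbabilityMeasure (Measure.map (fun x => σ * x) (gaussianReal 0 1)) :=
    Measure.isProbabilityMeasure_map (by fun_prop)
  rw [h, Measure.pi_map_pi (f := fun _ x => σ * x) (fun _ => by fun_prop)]

/-- The noise correlated with group `j` exceeds its threshold with probability at most
`M ^ (-q)`. -/
theorem group_noise_tail {N M : ℕ} {Kj : Fin M → ℕ} (hM : 2 ≤ M) (hN : 1 ≤ N)
    (X : Matrix (Fin N) (GIdx Kj) ℝ) (j : Fin M) (hKj : 1 ≤ Kj j) {σ : ℝ} (hσ : 0 < σ)
    {q : ℝ} (hq : 1 < q) {l : ℝ}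
    (hl : 2 * σ / Real.sqrt N *
      Real.sqrt (trPsi X j + 2 * specPsi X j *
        (2 * q * Real.log M + Real.sqrt (Kj j * q * Real.log M))) ≤ l) :
    (Measure.pi fun _ : Fin N => gaussianReal 0 (σ ^ 2).toNNReal).real
      {w | (N * l / 2) ^ 2 < ∑ t, (∑ i, X i ⟨j, t⟩ * w i) ^ 2} ≤ (M : ℝ) ^ (-q) := by
  have hN0 : (0 : ℝ) < N := by exact_mod_cast hN
  have hM0 : (0 : ℝ) < M := by positivity
  have hlog : 0 < Real.log M := Real.log_pos (by exact_mod_cast hM)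
  have hx : 0 < q * Real.log M := by positivity
  have htr := trPsi_nonneg X j
  have hsp := specPsi_nonneg X j
  set T := trPsi X j + 2 * specPsi X j *
        (2 * q * Real.log M + Real.sqrt (Kj j * q * Real.log M)) with hT
  have hT0 : 0 ≤ T := by positivity
  have hsq : N * (σ ^ 2 * T) ≤ (N * l / 2) ^ 2 := by
    have h := pow_le_pow_left₀ (by positivity) hl 2
    rw [mul_pow, div_pow, Real.sq_sqrt hN0.le, Real.sq_sqrt hT0, div_mul_eq_mul_div,
      div_le_iff₀ hN0] at h
    nlinarith
  rw [pi_gaussian_eq_map_smul, Measure.real, Measure.map_apply (by fun_prop)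
    (measurableSet_lt measurable_const (by fun_prop)), ← Measure.real]
  have hscale : ∀ z : Fin N → ℝ, ∑ t, (∑ i, X i ⟨j, t⟩ * (σ * z i)) ^ 2 =
      σ ^ 2 * ∑ t, (∑ i, X i ⟨j, t⟩ * z i) ^ 2 := by
    intro z
    rw [mul_sum]
    refine sum_congr rfl fun t _ => ?_
    rw [← mul_pow, mul_sum]
    congr 1
    exact sum_congr rfl fun i _ => by ring
  have hexp : (M : ℝ) ^ (-q) = Real.exp (-(q * Real.log M)) := by
    rw [Real.rpow_def_of_pos hM0]; congr 1; ring
  rw [hexp]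
  have hA := group_quad_le_specPsi hN X j
  have hsub : ∀ z : Fin N → ℝ,
      (N * l / 2) ^ 2 < ∑ t, (∑ i, X i ⟨j, t⟩ * (σ * z i)) ^ 2 →
      N * T < ∑ t, (∑ i, X i ⟨j, t⟩ * z i) ^ 2 := by
    intro z hz
    rw [hscale] at hz
    have : σ ^ 2 * (N * T) < σ ^ 2 * ∑ t, (∑ i, X i ⟨j, t⟩ * z i) ^ 2 := by linarith
    exact lt_of_mul_lt_mul_left this (by positivity)
  rcases hsp.eq_or_lt with h0 | hpos
  · -- a vanishing spectral norm forces the columns of the group to vanish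
    have hcol : ∀ t i, X i ⟨j, t⟩ = 0 := by
      intro t i
      have h := hA (Pi.single t 1)
      rw [← h0] at h
      simp only [mul_zero, zero_mul] at h
      have h' := (sum_eq_zero_iff_of_nonneg fun i _ => sq_nonneg _).1
        (le_antisymm h (by positivity)) i (mem_univ i)
      simpa [Pi.single_apply] using h'
    have hempty : ((fun (z : Fin N → ℝ) i => σ * z i) ⁻¹'
        {w | (N * l / 2) ^ 2 < ∑ t, (∑ i, X i ⟨j, t⟩ * w i) ^ 2}) = ∅ := by
      ext z
      simp only [Set.mem_preimage, Set.mem_ofPred_eq, Set.mem_empty_iff_false, iff_false, hcol]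
      simp
      positivity
    rw [hempty]
    simpa using (Real.exp_pos _).le
  · refine le_trans (measureReal_mono ?_ (measure_ne_top _ _))
      (gaussian_quadratic_tail hKj (fun i t => X i ⟨j, t⟩) (mul_pos hN0 hpos) hx hA)
    intro z hz
    have h := hsub z hz
    refine le_trans (le_of_eq ?_) h.le
    rw [hT, trPsi]
    simp only [mul_assoc]
    field_simp

/-! ### Deterministic oracle inequality -/

theorem gnorm_nonneg {M : ℕ} {Kj : Fin M → ℕ} (β : GIdx Kj → ℝ) (j : Fin M) : 0 ≤ gnorm β j :=
  Real.sqrt_nonneg _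

theorem gnorm_eq_norm {M : ℕ} {Kj : Fin M → ℕ} (β : GIdx Kj → ℝ) (j : Fin M) :
    gnorm β j = ‖(WithLp.toLp 2 fun t => β ⟨j, t⟩ : EuclideanSpace ℝ (Fin (Kj j)))‖ := by
  simp [gnorm, EuclideanSpace.norm_eq]

theorem gnorm_sub_gnorm_le {M : ℕ} {Kj : Fin M → ℕ} (b β : GIdx Kj → ℝ) (j : Fin M) :
    gnorm β j - gnorm b j ≤ gnorm (b - β) j := by
  have h := norm_sub_norm_le
    (WithLp.toLp 2 fun t => β ⟨j, t⟩ : EuclideanSpace ℝ (Fin (Kj j)))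
    (WithLp.toLp 2 fun t => b ⟨j, t⟩)
  rw [norm_sub_rev, ← WithLp.toLp_sub] at h
  simp only [gnorm_eq_norm]
  exact h

theorem gnorm_sub_of_gnorm_eq_zero {M : ℕ} {Kj : Fin M → ℕ} (b β : GIdx Kj → ℝ) (j : Fin M)
    (h : gnorm β j = 0) : gnorm (b - β) j = gnorm b j := by
  have h0 : ∀ t, β ⟨j, t⟩ = 0 := fun t => by
    have := (Real.sqrt_eq_zero (by positivity)).1 h
    simpa using (sum_eq_zero_iff_of_nonneg fun t _ => sq_nonneg _).1 this t (mem_univ t)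
  simp [gnorm, h0]

/-- Groupwise Cauchy–Schwarz for the noise term, on the event that every `‖X_{G_j}ᵀ w‖ / N`
is at most `λ_j / 2`. -/
theorem noise_inner_le {N M : ℕ} {Kj : Fin M → ℕ} (hN : 1 ≤ N)
    (X : Matrix (Fin N) (GIdx Kj) ℝ) (lam : Fin M → ℝ) (hlam : ∀ j, 0 < lam j)
    (w : Fin N → ℝ) (hw : ∀ j, ∑ t, (∑ i, X i ⟨j, t⟩ * w i) ^ 2 ≤ (N * lam j / 2) ^ 2)
    (D : GIdx Kj → ℝ) :
    2 / N * ∑ i, w i * X.mulVec D i ≤ ∑ j, lam j * gnorm D j := by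
  have hN0 : (0 : ℝ) < N := by exact_mod_cast hN
  have h1 : ∑ i, w i * X.mulVec D i = ∑ j, ∑ t, D ⟨j, t⟩ * ∑ i, X i ⟨j, t⟩ * w i := by
    rw [← Fintype.sum_sigma (fun k : GIdx Kj => D k * ∑ i, X i k * w i)]
    simp_rw [Matrix.mulVec, dotProduct, mul_sum]
    rw [sum_comm]
    exact sum_congr rfl fun k _ => sum_congr rfl fun i _ => by ring
  rw [h1, mul_sum]
  refine sum_le_sum fun j _ => ?_
  have h2 : ∑ t, D ⟨j, t⟩ * ∑ i, X i ⟨j, t⟩ * w i ≤ gnorm D j * (N * lam j / 2) := by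
    refine (Real.sum_mul_le_sqrt_mul_sqrt _ _ _).trans ?_
    refine mul_le_mul_of_nonneg_left ?_ (Real.sqrt_nonneg _)
    exact Real.sqrt_le_iff.2 ⟨by have := hlam j; positivity, hw j⟩
  calc _ ≤ 2 / N * (gnorm D j * (N * lam j / 2)) := by gcongr
    _ = _ := by field_simp

/-- The basic inequality of the Group Lasso, obtained by comparing the objective at the
minimizer `b` with its value at an arbitrary `β`. -/
theorem basic_inequality {N M : ℕ} {Kj : Fin M → ℕ} (hN : 1 ≤ N)
    (X : Matrix (Fin N) (GIdx Kj) ℝ) (βstar : GIdx Kj → ℝ)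
    (lam : Fin M → ℝ) (hlam : ∀ j, 0 < lam j)
    (w : Fin N → ℝ) (hw : ∀ j, ∑ t, (∑ i, X i ⟨j, t⟩ * w i) ^ 2 ≤ (N * lam j / 2) ^ 2)
    (b β : GIdx Kj → ℝ) (hb : IsGLSol X (fun i => X.mulVec βstar i + w i) lam b) :
    (∑ i, (X.mulVec (b - βstar) i) ^ 2) / N + ∑ j, lam j * gnorm (b - β) j ≤
      (∑ i, (X.mulVec (β - βstar) i) ^ 2) / N +
        4 * ∑ j ∈ univ.filter (fun j => gnorm β j ≠ 0), lam j * gnorm (b - β) j := by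
  have hN0 : (0 : ℝ) < N := by exact_mod_cast hN
  have h := hb β
  simp only [glObj] at h
  have hexp : ∀ u : GIdx Kj → ℝ, (∑ i, (X.mulVec u i - (X.mulVec βstar i + w i)) ^ 2) / N =
      (∑ i, (X.mulVec (u - βstar) i) ^ 2) / N - 2 / N * ∑ i, w i * X.mulVec (u - βstar) i +
        (∑ i, w i ^ 2) / N := by
    intro u
    rw [div_mul_eq_mul_div, mul_sum, ← sub_div, ← add_div, ← sum_sub_distrib, ← sum_add_distrib]
    congr 1
    refine sum_congr rfl fun i _ => ?_
    rw [Matrix.mulVec_sub, Pi.sub_apply]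
    ring
  rw [hexp b, hexp β] at h
  have hnoise := noise_inner_le hN X lam hlam w hw (b - β)
  have hlin : ∑ i, w i * X.mulVec (b - β) i =
      ∑ i, w i * X.mulVec (b - βstar) i - ∑ i, w i * X.mulVec (β - βstar) i := by
    rw [← sum_sub_distrib]
    refine sum_congr rfl fun i _ => ?_
    simp only [Matrix.mulVec_sub, Pi.sub_apply]
    ring
  rw [hlin, mul_sub] at hnoise
  have hpen : ∑ j, lam j * gnorm (b - β) j + ∑ j, lam j * gnorm β j - ∑ j, lam j * gnorm b j ≤
      2 * ∑ j ∈ univ.filter (fun j => gnorm β j ≠ 0), lam j * gnorm (b - β) j := by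
    rw [← sum_add_distrib, ← sum_sub_distrib, mul_sum, sum_filter]
    refine sum_le_sum fun j _ => ?_
    split_ifs with hj
    · nlinarith [mul_le_mul_of_nonneg_left (gnorm_sub_gnorm_le b β j) (hlam j).le]
    · push Not at hj
      rw [gnorm_sub_of_gnorm_eq_zero b β j hj, hj]
      linarith
  linarith

/-- The oracle inequality holds surely on the event that every `‖X_{G_j}ᵀ w‖ / N` is at most
`λ_j / 2`. -/
theorem deterministic_oracle {N M : ℕ} {Kj : Fin M → ℕ} (hN : 1 ≤ N)
    (X : Matrix (Fin N) (GIdx Kj) ℝ) (βstar : GIdx Kj → ℝ)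
    (lam : Fin M → ℝ) (hlam : ∀ j, 0 < lam j) (s : ℕ) (κ : ℝ) (hκ : 0 < κ)
    (hRE7 : ∀ J : Finset (Fin M), J.card ≤ s → ∀ Δ : GIdx Kj → ℝ, Δ ≠ 0 →
      (∑ j ∈ Jᶜ, lam j * gnorm Δ j) ≤ 7 * ∑ j ∈ J, lam j * gnorm Δ j →
      κ * Real.sqrt N * Real.sqrt (∑ j ∈ J, (gnorm Δ j) ^ 2) ≤
        Real.sqrt (∑ i, (X.mulVec Δ i) ^ 2))
    (w : Fin N → ℝ) (hw : ∀ j, ∑ t, (∑ i, X i ⟨j, t⟩ * w i) ^ 2 ≤ (N * lam j / 2) ^ 2)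
    (b β : GIdx Kj → ℝ) (hb : IsGLSol X (fun i => X.mulVec βstar i + w i) lam b)
    (hβ : (univ.filter (fun j => gnorm β j ≠ 0)).card ≤ s) :
    (∑ i, (X.mulVec (b - βstar) i) ^ 2) / N ≤
      96 / κ ^ 2 * (∑ j ∈ univ.filter (fun j => gnorm β j ≠ 0), (lam j) ^ 2) +
        2 / N * ∑ i, (X.mulVec (β - βstar) i) ^ 2 := by
  have hN0 : (0 : ℝ) < N := by exact_mod_cast hN
  have hbasic := basic_inequality hN X βstar lam hlam w hw b β hb
  set J := univ.filter (fun j => gnorm β j ≠ 0) with hJ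
  set a := (∑ i, (X.mulVec (b - βstar) i) ^ 2) / N with ha
  set c := (∑ i, (X.mulVec (β - βstar) i) ^ 2) / N with hc
  set S := ∑ j ∈ J, lam j * gnorm (b - β) j with hS
  set V := ∑ j ∈ J, lam j ^ 2 with hV
  have ha0 : 0 ≤ a := by positivity
  have hc0 : 0 ≤ c := by positivity
  have hV0 : 0 ≤ V := by positivity
  have hall0 : 0 ≤ ∑ j, lam j * gnorm (b - β) j :=
    sum_nonneg fun j _ => mul_nonneg (hlam j).le (gnorm_nonneg _ _)
  have hgoal : a ≤ 96 / κ ^ 2 * V + 2 * c → a ≤ 96 / κ ^ 2 * V +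
      2 / N * ∑ i, (X.mulVec (β - βstar) i) ^ 2 := by
    rw [hc, div_mul_eq_mul_div 2, ← mul_div_assoc]
    exact id
  apply hgoal
  have hVκ : 0 ≤ 96 / κ ^ 2 * V := by positivity
  -- the bias dominates the estimation error on `J`
  rcases lt_or_ge (4 * S) c with hcS | hcS
  · linarith
  by_cases hD : b - β = 0
  · have hSz : S = 0 := by
      rw [hS, hD]
      exact sum_eq_zero fun j _ => by simp [gnorm]
    linarith
  have hcone : ∑ j ∈ Jᶜ, lam j * gnorm (b - β) j ≤ 7 * S := by
    have hsplit := sum_add_sum_compl J fun j => lam j * gnorm (b - β) j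
    linarith
  have hRE := hRE7 J hβ (b - β) hD hcone
  set R := Real.sqrt (∑ j ∈ J, gnorm (b - β) j ^ 2) with hR
  have hSR : S ≤ Real.sqrt V * R := Real.sum_mul_le_sqrt_mul_sqrt _ _ _
  have htri : Real.sqrt (∑ i, (X.mulVec (b - β) i) ^ 2) ≤
      Real.sqrt N * (Real.sqrt a + Real.sqrt c) := by
    have h := norm_sub_le
      (WithLp.toLp 2 (X.mulVec (b - βstar)) : EuclideanSpace ℝ (Fin N))
      (WithLp.toLp 2 (X.mulVec (β - βstar)))
    rw [← WithLp.toLp_sub, ← Matrix.mulVec_sub, sub_sub_sub_cancel_right] at h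
    simp only [EuclideanSpace.norm_eq, Real.norm_eq_abs, sq_abs] at h
    rw [mul_add, ← Real.sqrt_mul hN0.le, ← Real.sqrt_mul hN0.le, ha, hc,
      mul_div_cancel₀ _ hN0.ne', mul_div_cancel₀ _ hN0.ne']
    exact h
  have hκR : κ * R ≤ Real.sqrt a + Real.sqrt c := by
    have h := hRE.trans htri
    have hsN : 0 < Real.sqrt N := Real.sqrt_pos.2 hN0
    refine le_of_mul_le_mul_left ?_ hsN
    linarith
  set p := Real.sqrt V / κ with hp
  have hp0 : 0 ≤ p := by positivity
  have hp2 : V / κ ^ 2 = p ^ 2 := by rw [hp, div_pow, Real.sq_sqrt hV0]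
  have hSp : S ≤ p * (Real.sqrt a + Real.sqrt c) := by
    refine hSR.trans ?_
    calc Real.sqrt V * R = p * (κ * R) := by rw [hp]; field_simp
      _ ≤ _ := by gcongr
  have hA2 := Real.sq_sqrt ha0
  have hC2 := Real.sq_sqrt hc0
  have e : 96 / κ ^ 2 * V = 96 * p ^ 2 := by rw [← hp2]; ring
  rw [e]
  -- Young's inequality with weight `1/3` on each of the two cross terms
  nlinarith [sq_nonneg (Real.sqrt a - 6 * p), sq_nonneg (Real.sqrt c - 6 * p), sq_nonneg p]

/-! ### The oracle inequality with high probability -/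

/-- under the strengthened restricted eigenvalue condition (with factor 7), with
probability at least `1 − 2M^{1−q}`, every Group Lasso solution `β̂` satisfies the
bias-including oracle inequality: for every `β` with `M(β) ≤ s`,
`(1/N)‖X(β̂ − β*)‖² ≤ (96/κ²)·Σ_{j∈J(β)} λ_j² + (2/N)‖X(β − β*)‖²`
(i.e. `(1/N)‖X(β̂ − β*)‖²` is bounded by the minimum of the right-hand side over such `β`). -/
theorem group_lasso_oracle_inequality_with_bias
    {N M : ℕ} {Kj : Fin M → ℕ} (hM : 2 ≤ M) (hN : 1 ≤ N) (hKj : ∀ j, 1 ≤ Kj j)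
    (X : Matrix (Fin N) (GIdx Kj) ℝ) (βstar : GIdx Kj → ℝ)
    {Ω : Type*} [MeasurableSpace Ω] (μ : Measure Ω) [IsProbabilityMeasure μ]
    (W : Ω → Fin N → ℝ) (σ : ℝ) (hσ : 0 < σ)
    (hW : Measure.map W μ = Measure.pi fun _ : Fin N => gaussianReal 0 (σ ^ 2).toNNReal)
    (q : ℝ) (hq : 1 < q) (lam : Fin M → ℝ) (hlam_pos : ∀ j, 0 < lam j)
    (hlam : ∀ j, 2 * σ / Real.sqrt N *
      Real.sqrt (trPsi X j + 2 * specPsi X j *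
        (2 * q * Real.log M + Real.sqrt (Kj j * q * Real.log M))) ≤ lam j)
    (s : ℕ) (hs : 1 ≤ s)
    (κ : ℝ) (hκ : 0 < κ)
    (hRE7 : ∀ J : Finset (Fin M), J.card ≤ s → ∀ Δ : GIdx Kj → ℝ, Δ ≠ 0 →
      (∑ j ∈ Jᶜ, lam j * gnorm Δ j) ≤ 7 * ∑ j ∈ J, lam j * gnorm Δ j →
      κ * Real.sqrt N * Real.sqrt (∑ j ∈ J, (gnorm Δ j) ^ 2) ≤
        Real.sqrt (∑ i, (X.mulVec Δ i) ^ 2)) :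
    ∃ A : Set Ω, MeasurableSet A ∧ 1 - 2 * (M : ℝ) ^ ((1 : ℝ) - q) ≤ (μ A).toReal ∧
      ∀ ω ∈ A, ∀ b : GIdx Kj → ℝ,
        IsGLSol X (fun i => X.mulVec βstar i + W ω i) lam b →
        ∀ β : GIdx Kj → ℝ,
          (Finset.univ.filter (fun j => gnorm β j ≠ 0)).card ≤ s →
          (∑ i, (X.mulVec (b - βstar) i) ^ 2) / N ≤
            96 / κ ^ 2 * (∑ j ∈ Finset.univ.filter (fun j => gnorm β j ≠ 0), (lam j) ^ 2) +
              2 / N * ∑ i, (X.mulVec (β - βstar) i) ^ 2 := by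
  have hprob : IsProbabilityMeasure
      (Measure.pi fun _ : Fin N => gaussianReal 0 (σ ^ 2).toNNReal) := inferInstance
  -- a nonzero push-forward forces `W` to be a.e. measurable, since otherwise `Measure.map` is `0`
  have hWm : AEMeasurable W μ := by
    by_contra hcon
    rw [Measure.map_of_not_aemeasurable hcon] at hW
    rw [← hW] at hprob
    exact IsProbabilityMeasure.ne_zero (0 : Measure (Fin N → ℝ)) rfl
  set P := Measure.pi fun _ : Fin N => gaussianReal 0 (σ ^ 2).toNNReal with hP
  let bad : Fin M → Set (Fin N → ℝ) := fun j =>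
    {w | (N * lam j / 2) ^ 2 < ∑ t, (∑ i, X i ⟨j, t⟩ * w i) ^ 2}
  have hbadm : ∀ j, MeasurableSet (bad j) := fun j =>
    measurableSet_lt measurable_const (by fun_prop)
  have hU : MeasurableSet (⋃ j, bad j) := MeasurableSet.iUnion hbadm
  have hbad : P.real (⋃ j, bad j) ≤ (M : ℝ) ^ (1 - q) := by
    have hM0 : (0 : ℝ) < M := by positivity
    calc P.real (⋃ j, bad j) ≤ ∑ j, P.real (bad j) := measureReal_iUnion_fintype_le _
      _ ≤ ∑ _j : Fin M, (M : ℝ) ^ (-q) :=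
        sum_le_sum fun j _ => group_noise_tail hM hN X j (hKj j) hσ hq (hlam j)
      _ = (M : ℝ) ^ (1 - q) := by
        simp [sub_eq_add_neg, Real.rpow_add hM0]
  have hgood : P.real (⋃ j, bad j)ᶜ = 1 - P.real (⋃ j, bad j) := by
    rw [measureReal_compl hU]; simp
  -- `W` is only a.e. measurable: pass to a measurable subset of the same measure
  obtain ⟨A, hAsub, hAm, hAeq⟩ :=
    (hWm.nullMeasurableSet_preimage hU.compl).exists_measurable_subset_ae_eq
  refine ⟨A, hAm, ?_, ?_⟩
  · -- the union bound gives `1 - M ^ (1 - q)`, without the factor `2`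
    rw [measure_congr hAeq, ← Measure.map_apply_of_aemeasurable hWm hU.compl, hW]
    change _ ≤ P.real _
    rw [hgood]
    have : 0 ≤ (M : ℝ) ^ (1 - q) := by positivity
    linarith
  · intro ω hω b hb β hβ
    have hω' := hAsub hω
    refine deterministic_oracle hN X βstar lam hlam_pos s κ hκ hRE7 (W ω) (fun j => ?_) b β hb hβ
    by_contra! hcon
    exact hω' (Set.mem_iUnion.2 ⟨j, hcon⟩)

end GroupLasso
end
end

section
/- In the multi-task model with M ≥ 2 and T, n ≥ 1, set λ = (2√2·σ/√(nT))·(1 + A·log M/T)^{1/2} with A > 5/2. Then with probability at least 1 − 2M^{1−2A/5}, every multi-task Group Lasso solution β̂ satisfies (1/(nT))·‖X(β̂ − β*)‖² ≤ (8√2·σ/√(nT))·(1 + A·log M/T)^{1/2}·‖β*‖_{2,1}. -/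
/-!
Two ingredients are combined.

*Deterministic part* (`slow_rate_of_noise_le`). Comparing the objective at `β̂` and at `β*` gives
`‖XΔ‖²/(nT) ≤ 2⟨XᵀW, Δ⟩/(nT) + 2λ(‖β*‖_{2,1} - ‖β̂‖_{2,1})` with `Δ = β̂ - β*`. If every group of
`XᵀW` has norm at most `nTλ`, Cauchy–Schwarz bounds the first term by `2λ‖Δ‖_{2,1}`, and the
triangle inequality leaves `4λ‖β*‖_{2,1}`.

*Probabilistic part* (`chernoff_noise`). Because of the normalisation of `X`, the squared norm of
a group of `XᵀW` is `nσ²` times a `χ²_T` variable, and `(nTλ)² = nσ²(8T + 8A log M)`. Since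
`𝔼 exp(χ²_T/4) = 2^{T/2}`, Markov's inequality bounds the probability of exceeding this threshold
by `2^{T/2} exp(-2T - 2A log M)`, which is at most `M^{-2A/5}`. A union bound over the `M` groups
concludes.
-/

open MeasureTheory ProbabilityTheory Finset

noncomputable section

namespace MultiTask

/-- `‖β^j‖`: Euclidean norm, across the tasks, of the coefficients of the `j`-th variable. -/
def gnorm {M T : ℕ} (β : Fin T → Fin M → ℝ) (j : Fin M) : ℝ :=
  Real.sqrt (∑ t, (β t j) ^ 2)

/-- The multi-task Group Lasso objective
`(1/T) Σ_t (1/n)‖X_t β_t − y_t‖² + 2λ Σ_j ‖β^j‖`. -/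
def mtObj {n M T : ℕ} (Xt : Fin T → Matrix (Fin n) (Fin M) ℝ) (y : Fin T → Fin n → ℝ)
    (lam : ℝ) (β : Fin T → Fin M → ℝ) : ℝ :=
  (1 / T) * ∑ t, (∑ i, ((Xt t).mulVec (β t) i - y t i) ^ 2) / n + 2 * lam * ∑ j, gnorm β j

/-- `b` is a multi-task Group Lasso solution. -/
def IsMTSol {n M T : ℕ} (Xt : Fin T → Matrix (Fin n) (Fin M) ℝ) (y : Fin T → Fin n → ℝ)
    (lam : ℝ) (b : Fin T → Fin M → ℝ) : Prop :=
  ∀ β : Fin T → Fin M → ℝ, mtObj Xt y lam b ≤ mtObj Xt y lam β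

/-- `‖XΔ‖²` for the block-diagonal design matrix with blocks `X_1,…,X_T`. -/
def XnormSq {n M T : ℕ} (Xt : Fin T → Matrix (Fin n) (Fin M) ℝ)
    (Δ : Fin T → Fin M → ℝ) : ℝ :=
  ∑ t, ∑ i, ((Xt t).mulVec (Δ t) i) ^ 2

/-! ### The deterministic inequality -/

lemma gnorm_sub_le {M T : ℕ} (b c : Fin T → Fin M → ℝ) (j : Fin M) :
    gnorm (b - c) j ≤ gnorm b j + gnorm c j := by
  have h := norm_sub_le (WithLp.toLp 2 fun t => b t j : EuclideanSpace ℝ (Fin T))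
    (WithLp.toLp 2 fun t => c t j)
  simpa [gnorm, EuclideanSpace.norm_eq] using h

/-- Exchanging the order of summation in `⟨W, XΔ⟩ = ⟨XᵀW, Δ⟩` and applying Cauchy–Schwarz
in each group. -/
lemma inner_noise_le {n M T : ℕ} (Xt : Fin T → Matrix (Fin n) (Fin M) ℝ)
    (w : Fin T → Fin n → ℝ) (Δ : Fin T → Fin M → ℝ) (r : ℝ)
    (hw : ∀ j, Real.sqrt (∑ t, (∑ i, Xt t i j * w t i) ^ 2) ≤ r) :
    ∑ t, ∑ i, w t i * (Xt t).mulVec (Δ t) i ≤ r * ∑ j, gnorm Δ j := by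
  have h1 : ∑ t, ∑ i, w t i * (Xt t).mulVec (Δ t) i
      = ∑ j, ∑ t, (∑ i, Xt t i j * w t i) * Δ t j := by
    rw [Finset.sum_comm (s := (univ : Finset (Fin M)))]
    refine Finset.sum_congr rfl fun t _ => ?_
    simp only [Matrix.mulVec, dotProduct, Finset.mul_sum, Finset.sum_mul]
    rw [Finset.sum_comm]
    exact Finset.sum_congr rfl fun j _ => Finset.sum_congr rfl fun i _ => by ring
  rw [h1, Finset.mul_sum]
  refine Finset.sum_le_sum fun j _ => ?_
  exact (Real.sum_mul_le_sqrt_mul_sqrt _ _ _).trans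
    (mul_le_mul_of_nonneg_right (hw j) (Real.sqrt_nonneg _))

/-- The deterministic part of the argument: the slow-rate inequality holds for every solution
as soon as all groups of the noise correlation `XᵀW` have norm at most `nTλ`. -/
lemma slow_rate_of_noise_le {n M T : ℕ} (hT : 1 ≤ T) (hn : 1 ≤ n)
    (Xt : Fin T → Matrix (Fin n) (Fin M) ℝ) (βstar : Fin T → Fin M → ℝ)
    (w : Fin T → Fin n → ℝ) (lam : ℝ) (hlam : 0 ≤ lam)
    (hw : ∀ j, Real.sqrt (∑ t, (∑ i, Xt t i j * w t i) ^ 2) ≤ n * T * lam)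
    (b : Fin T → Fin M → ℝ)
    (hb : IsMTSol Xt (fun t i => (Xt t).mulVec (βstar t) i + w t i) lam b) :
    XnormSq Xt (b - βstar) / (n * T) ≤ 4 * lam * ∑ j, gnorm βstar j := by
  have hn0 : (0 : ℝ) < n := by exact_mod_cast hn
  have hT0 : (0 : ℝ) < T := by exact_mod_cast hT
  have hin := inner_noise_le Xt w (b - βstar) _ hw
  have hobj : ∀ β : Fin T → Fin M → ℝ,
      mtObj Xt (fun t i => (Xt t).mulVec (βstar t) i + w t i) lam β
        = (XnormSq Xt (β - βstar)
            - 2 * ∑ t, ∑ i, w t i * (Xt t).mulVec ((β - βstar) t) i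
            + ∑ t, ∑ i, w t i ^ 2) / (n * T) + 2 * lam * ∑ j, gnorm β j := by
    intro β
    unfold mtObj XnormSq
    congr 1
    rw [← Finset.sum_div, Finset.mul_sum, ← Finset.sum_sub_distrib, ← Finset.sum_add_distrib]
    rw [one_div, inv_mul_eq_div, div_div]
    congr 1
    refine Finset.sum_congr rfl fun t _ => ?_
    rw [Finset.mul_sum, ← Finset.sum_sub_distrib, ← Finset.sum_add_distrib]
    refine Finset.sum_congr rfl fun i _ => ?_
    simp only [Pi.sub_apply, Matrix.mulVec_sub]
    ring
  have h := hb βstar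
  rw [hobj, hobj] at h
  have hz : XnormSq Xt (βstar - βstar) = 0 := by simp [XnormSq]
  have hz' : ∑ t, ∑ i, w t i * (Xt t).mulVec ((βstar - βstar) t) i = 0 := by simp
  rw [hz, hz'] at h
  have htri : ∑ j, gnorm (b - βstar) j ≤ ∑ j, gnorm b j + ∑ j, gnorm βstar j := by
    rw [← Finset.sum_add_distrib]
    exact Finset.sum_le_sum fun j _ => gnorm_sub_le b βstar j
  have hin' : (2 * ∑ t, ∑ i, w t i * (Xt t).mulVec ((b - βstar) t) i) / (n * T)
      ≤ 2 * lam * ∑ j, gnorm (b - βstar) j := by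
    rw [div_le_iff₀ (by positivity)]
    linarith
  have hmul := mul_le_mul_of_nonneg_left htri (by positivity : 0 ≤ 2 * lam)
  rw [add_div, sub_div, add_div] at h
  simp only [mul_zero, sub_zero, zero_div, zero_add] at h
  linarith

/-! ### Gaussian tail bounds -/

open scoped NNReal in
/-- A linear form `∑ aᵢ wᵢ` of i.i.d. centred Gaussian variables is centred Gaussian, with
variance `(∑ aᵢ²) v`. -/
lemma map_linear_pi_gaussianReal {n : ℕ} (a : Fin n → ℝ) (v : ℝ≥0) :
    Measure.map (fun w : Fin n → ℝ => ∑ i, a i * w i) (Measure.pi fun _ => gaussianReal 0 v)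
      = gaussianReal 0 ((∑ i, a i ^ 2).toNNReal * v) := by
  have hm : Measurable (fun w : Fin n → ℝ => ∑ i, a i * w i) := by fun_prop
  have : IsProbabilityMeasure (Measure.map (fun w : Fin n → ℝ => ∑ i, a i * w i)
      (Measure.pi fun _ => gaussianReal 0 v)) := Measure.isProbabilityMeasure_map hm.aemeasurable
  refine Measure.ext_of_charFun ?_
  ext s
  rw [charFun_apply_real, integral_map hm.aemeasurable (by fun_prop), charFun_gaussianReal]
  have h1 : ∀ w : Fin n → ℝ, Complex.exp (s * ((∑ i, a i * w i : ℝ) : ℂ) * Complex.I)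
      = ∏ i, Complex.exp (((s * a i : ℝ) : ℂ) * (w i : ℂ) * Complex.I) := by
    intro w
    rw [← Complex.exp_sum]
    congr 1
    push_cast
    rw [Finset.mul_sum, Finset.sum_mul]
    exact Finset.sum_congr rfl fun i _ => by ring
  simp_rw [h1]
  rw [integral_fintype_prod_eq_prod
    (f := fun i (x : ℝ) => Complex.exp (((s * a i : ℝ) : ℂ) * (x : ℂ) * Complex.I))]
  simp_rw [← charFun_apply_real, charFun_gaussianReal]
  rw [← Complex.exp_sum]
  congr 1
  have h2 : ((((∑ i, a i ^ 2).toNNReal * v : ℝ≥0) : ℝ) : ℂ) = (∑ i, (a i : ℂ) ^ 2) * (v : ℂ) := by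
    rw [NNReal.coe_mul, Real.coe_toNNReal _ (Finset.sum_nonneg fun i _ => sq_nonneg _)]
    push_cast
    rfl
  simp only [Complex.ofReal_zero, mul_zero, zero_mul, zero_sub]
  rw [h2, Finset.sum_mul, Finset.sum_mul, Finset.sum_div, ← Finset.sum_neg_distrib]
  refine Finset.sum_congr rfl fun i _ => ?_
  push_cast
  ring

open scoped NNReal in
/-- The moment generating function of `χ²₁` at `1/4`: if `x ∼ N(0, v)` then
`𝔼 exp (x² / (4v)) = √2`. -/
lemma integral_exp_sq_gaussianReal {v : ℝ≥0} (hv : v ≠ 0) :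
    Integrable (fun x : ℝ => Real.exp (x ^ 2 / (4 * v))) (gaussianReal 0 v) ∧
      ∫ x, Real.exp (x ^ 2 / (4 * v)) ∂(gaussianReal 0 v) = Real.sqrt 2 := by
  have hv0 : (0 : ℝ) < v := by exact_mod_cast pos_iff_ne_zero.mpr hv
  have hpt : ∀ x : ℝ, gaussianPDFReal 0 v x * Real.exp (x ^ 2 / (4 * v))
      = (Real.sqrt (2 * Real.pi * v))⁻¹ * Real.exp (-(1 / (4 * v)) * x ^ 2) := by
    intro x
    rw [gaussianPDFReal, mul_assoc, ← Real.exp_add]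
    congr 2
    field_simp
    ring
  constructor
  · rw [gaussianReal_of_var_ne_zero _ hv, integrable_withDensity_iff_integrable_smul']
    · have : ∀ x : ℝ, (gaussianPDF 0 v x).toReal • Real.exp (x ^ 2 / (4 * v))
          = (Real.sqrt (2 * Real.pi * v))⁻¹ * Real.exp (-(1 / (4 * v)) * x ^ 2) := by
        intro x
        rw [toReal_gaussianPDF, smul_eq_mul, hpt]
      simp_rw [this]
      exact (integrable_exp_neg_mul_sq (by positivity)).const_mul _
    · exact measurable_gaussianPDF _ _
    · exact ae_of_all _ fun x => by simp [gaussianPDF]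
  · rw [integral_gaussianReal_eq_integral_smul hv]
    simp_rw [smul_eq_mul, hpt]
    rw [integral_const_mul, integral_gaussian, inv_mul_eq_div, ← Real.sqrt_div (by positivity)]
    congr 1
    field_simp
    ring

open scoped NNReal in
/-- Chernoff bound for a `χ²_T` variable: with `∑ᵢ aₜᵢ² = n` for every `t`, the sum over `t` of
`(∑ᵢ aₜᵢ wₜᵢ)²` is `n v` times such a variable. -/
lemma chernoff_noise {n T : ℕ} (hn : 1 ≤ n) (a : Fin T → Fin n → ℝ)
    (ha : ∀ t, ∑ i, a t i ^ 2 = n) {v : ℝ≥0} (hv : v ≠ 0) (K : ℝ) :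
    (Measure.pi fun _ : Fin T => Measure.pi fun _ : Fin n => gaussianReal 0 v).real
        {w | n * v * K ≤ ∑ t, (∑ i, a t i * w t i) ^ 2}
      ≤ Real.sqrt 2 ^ T * Real.exp (-(K / 4)) := by
  set V : ℝ≥0 := n * v with hV
  have hn0 : (n : ℝ≥0) ≠ 0 := by
    simp only [ne_eq, Nat.cast_eq_zero]
    omega
  have hV0 : V ≠ 0 := mul_ne_zero hn0 hv
  have hVpos : (0 : ℝ) < V := by exact_mod_cast pos_iff_ne_zero.mpr hV0
  have hm : ∀ t, Measurable (fun w : Fin n → ℝ => ∑ i, a t i * w i) := fun t => by fun_prop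
  have hlaw : ∀ t, Measure.map (fun w : Fin n → ℝ => ∑ i, a t i * w i)
      (Measure.pi fun _ => gaussianReal 0 v) = gaussianReal 0 V := by
    intro t
    rw [map_linear_pi_gaussianReal, ha, Real.toNNReal_natCast]
  obtain ⟨hint, hval⟩ := integral_exp_sq_gaussianReal hV0
  let f : Fin T → (Fin n → ℝ) → ℝ := fun t w => Real.exp ((∑ i, a t i * w i) ^ 2 / (4 * V))
  have hfint : ∀ t, Integrable (f t) (Measure.pi fun _ => gaussianReal 0 v) := by
    intro t
    rw [← hlaw t] at hint
    exact hint.comp_measurable (hm t)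
  have hfval : ∀ t, ∫ w, f t w ∂(Measure.pi fun _ => gaussianReal 0 v) = Real.sqrt 2 := by
    intro t
    rw [← hval, ← hlaw t, integral_map (hm t).aemeasurable (by fun_prop)]
  have hprod : ∫ w : Fin T → Fin n → ℝ, ∏ t, f t (w t)
      ∂(Measure.pi fun _ => Measure.pi fun _ => gaussianReal 0 v) = Real.sqrt 2 ^ T := by
    rw [integral_fintype_prod_eq_prod (f := f)]
    simp [hfval]
  have hmarkov := mul_meas_ge_le_integral_of_nonneg
    (ae_of_all _ fun w => Finset.prod_nonneg fun t _ => (Real.exp_pos _).le)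
    (Integrable.fintype_prod (f := f) hfint) (Real.exp (K / 4))
  rw [hprod] at hmarkov
  have hset : {w : Fin T → Fin n → ℝ | n * v * K ≤ ∑ t, (∑ i, a t i * w t i) ^ 2}
      = {w | Real.exp (K / 4) ≤ ∏ t, f t (w t)} := by
    ext w
    simp only [Set.mem_ofPred_eq, f]
    rw [← Real.exp_sum, Real.exp_le_exp, ← Finset.sum_div, div_le_div_iff₀ (by norm_num)
      (by positivity), hV]
    push_cast
    constructor <;> intro h <;> linarith
  rw [hset, Real.exp_neg, ← div_eq_mul_inv, le_div_iff₀ (Real.exp_pos _), mul_comm]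
  exact hmarkov

/-! ### The slow rate -/

/-- slow-rate bound for multi-task Group Lasso. With probability at least
`1 − 2M^{1−2A/5}`, every solution `β̂` satisfies
`(1/(nT))‖X(β̂ − β*)‖² ≤ (8√2σ/√(nT))(1 + A log M/T)^{1/2}‖β*‖_{2,1}`. -/
theorem multitask_slow_rate
    {n M T : ℕ} (hM : 2 ≤ M) (hT : 1 ≤ T) (hn : 1 ≤ n)
    (Xt : Fin T → Matrix (Fin n) (Fin M) ℝ)
    (hdiag : ∀ t j, (∑ i, (Xt t i j) ^ 2) / n = 1)
    (βstar : Fin T → Fin M → ℝ)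
    {Ω : Type*} [MeasurableSpace Ω] (μ : Measure Ω) [IsProbabilityMeasure μ]
    (W : Ω → Fin T → Fin n → ℝ) (σ : ℝ) (hσ : 0 < σ)
    (hW : Measure.map W μ =
      Measure.pi fun _ : Fin T => Measure.pi fun _ : Fin n => gaussianReal 0 (σ ^ 2).toNNReal)
    (A : ℝ) (hA : 5 / 2 < A) (lam : ℝ)
    (hlam : lam = 2 * Real.sqrt 2 * σ / Real.sqrt (n * T) *
      Real.sqrt (1 + A * Real.log M / T))
    :
    ∃ Ev : Set Ω, MeasurableSet Ev ∧
      1 - 2 * (M : ℝ) ^ ((1 : ℝ) - 2 * A / 5) ≤ (μ Ev).toReal ∧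
      ∀ ω ∈ Ev, ∀ b : Fin T → Fin M → ℝ,
        IsMTSol Xt (fun t i => (Xt t).mulVec (βstar t) i + W ω t i) lam b →
        XnormSq Xt (b - βstar) / (n * T) ≤
          8 * Real.sqrt 2 * σ / Real.sqrt (n * T) * Real.sqrt (1 + A * Real.log M / T) *
            ∑ j, gnorm βstar j := by
  have hn0 : (0 : ℝ) < n := by exact_mod_cast hn
  have hT0 : (0 : ℝ) < T := by exact_mod_cast hT
  have hM1 : (1 : ℝ) ≤ M := by exact_mod_cast (by omega : 1 ≤ M)
  have hlog : 0 ≤ Real.log M := Real.log_nonneg hM1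
  have hA0 : 0 < A := by linarith
  have hlam0 : 0 ≤ lam := by rw [hlam]; positivity
  have hv : (σ ^ 2).toNNReal ≠ 0 := by simpa using hσ.ne'
  have hvc : ((σ ^ 2).toNNReal : ℝ) = σ ^ 2 := Real.coe_toNNReal _ (sq_nonneg _)
  set ν : Measure (Fin T → Fin n → ℝ) :=
    Measure.pi fun _ : Fin T => Measure.pi fun _ : Fin n => gaussianReal 0 (σ ^ 2).toNNReal with hν
  -- the `χ²_T` threshold `(nTλ)² / (nσ²)`
  let K : ℝ := 8 * T + 8 * A * Real.log M
  let B : Fin M → Set (Fin T → Fin n → ℝ) := fun j =>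
    {w | n * ((σ ^ 2).toNNReal : ℝ) * K ≤ ∑ t, (∑ i, Xt t i j * w t i) ^ 2}
  have hBm : ∀ j, MeasurableSet (B j) := fun j =>
    measurableSet_le measurable_const (by fun_prop)
  have hK : (n * T * lam) ^ 2 = n * ((σ ^ 2).toNNReal : ℝ) * K := by
    have e1 : Real.sqrt 2 ^ 2 = 2 := Real.sq_sqrt (by norm_num)
    have e2 : Real.sqrt (n * T) ^ 2 = n * T := Real.sq_sqrt (by positivity)
    have e3 : Real.sqrt (1 + A * Real.log M / T) ^ 2 = 1 + A * Real.log M / T :=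
      Real.sq_sqrt (by positivity)
    simp only [hvc, hlam, mul_pow _ _ 2, div_pow, e1, e2, e3, K]
    field_simp
    ring
  have hBle : ∀ j, ν.real (B j) ≤ (M : ℝ) ^ (-(2 * A / 5)) := by
    intro j
    have h1 := chernoff_noise hn (fun t i => Xt t i j)
      (fun t => by have := hdiag t j; rwa [div_eq_one_iff_eq hn0.ne'] at this) hv K
    refine h1.trans ?_
    have h2 : Real.sqrt 2 ≤ Real.exp 1 := by
      have : Real.sqrt 2 ≤ 2 := Real.sqrt_le_iff.mpr (by norm_num)
      linarith [Real.add_one_le_exp 1]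
    have h3 : Real.sqrt 2 ^ T ≤ Real.exp T := by
      calc Real.sqrt 2 ^ T ≤ Real.exp 1 ^ T := pow_le_pow_left₀ (Real.sqrt_nonneg _) h2 T
        _ = Real.exp T := by rw [← Real.exp_nat_mul, mul_one]
    refine (mul_le_mul_of_nonneg_right h3 (Real.exp_pos _).le).trans ?_
    rw [← Real.exp_add, Real.rpow_def_of_pos (by linarith), Real.exp_le_exp]
    simp only [K]
    nlinarith [mul_nonneg hA0.le hlog]
  have hWae : AEMeasurable W μ := by
    refine AEMeasurable.of_map_ne_zero ?_
    rw [hW]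
    exact IsProbabilityMeasure.ne_zero _
  have hUm : MeasurableSet (⋃ j, B j) := MeasurableSet.iUnion hBm
  have hU : ν.real (⋃ j, B j) ≤ (M : ℝ) ^ ((1 : ℝ) - 2 * A / 5) := by
    calc ν.real (⋃ j, B j) ≤ ∑ j, ν.real (B j) := measureReal_iUnion_fintype_le _
      _ ≤ ∑ _j : Fin M, (M : ℝ) ^ (-(2 * A / 5)) := Finset.sum_le_sum fun j _ => hBle j
      _ = (M : ℝ) ^ ((1 : ℝ) - 2 * A / 5) := by
        rw [Finset.sum_const, card_univ, Fintype.card_fin, nsmul_eq_mul, sub_eq_add_neg,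
          Real.rpow_add (by linarith), Real.rpow_one]
  -- `W` is only almost everywhere measurable, so the bad event is replaced by a measurable hull
  refine ⟨(toMeasurable μ (W ⁻¹' ⋃ j, B j))ᶜ, (measurableSet_toMeasurable _ _).compl, ?_, ?_⟩
  · change _ ≤ μ.real _
    rw [probReal_compl_eq_one_sub (measurableSet_toMeasurable _ _), measureReal_def,
      measure_toMeasurable, ← Measure.map_apply_of_aemeasurable hWae hUm, hW, ← measureReal_def]
    have : 0 ≤ (M : ℝ) ^ ((1 : ℝ) - 2 * A / 5) := by positivity
    linarith
  · intro ω hω b hb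
    have hω' : W ω ∉ ⋃ j, B j := fun h => hω (subset_toMeasurable _ _ h)
    have h := slow_rate_of_noise_le hT hn Xt βstar (W ω) lam hlam0 (fun j => ?_) b hb
    · refine h.trans_eq ?_
      rw [hlam]
      ring
    · refine Real.sqrt_le_iff.mpr ⟨by positivity, ?_⟩
      rw [hK]
      by_contra hcon
      exact hω' (Set.mem_iUnion.mpr ⟨j, (not_le.mp hcon).le⟩)

end MultiTask
end
end

section
/- In the multi-task model with M ≥ 2 and T, n ≥ 1, set λ = (2√2·σ/√(nT))·(1 + A·log M/T)^{1/2} with A > 5/2, and assume M(β*) ≤ s and Assumption RE-MT(s) with constant κ_MT = κ_MT(s). Then with probability at least 1 − 2M^{1−2A/5}, every multi-task Group Lasso solution β̂ satisfies simultaneously: (i) (1/(nT))‖X(β̂ − β*)‖² ≤ (128σ²/κ_MT²)·(s/n)·(1 + A·log M/T); (ii) (1/√T)‖β̂ − β*‖_{2,1} ≤ (32√2·σ/κ_MT²)·(s/√n)·(1 + A·log M/T)^{1/2}; (iii) M(β̂) ≤ (64 φ_MT/κ_MT²)·s, where φ_MT is the largest eigenvalue of XᵀX/n. If moreover κ_MT(2s)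 > 0 (Assumption RE-MT(2s)), then with the same probability (iv) (1/√T)‖β̂ − β*‖ ≤ (16√5·σ/κ_MT(2s)²)·√(s/n)·(1 + A·log M/T)^{1/2}. -/
/-!
The proof splits into one probabilistic event and a deterministic argument on it.

Write `N = nT`. The event is `2‖(Xᵀw)^j‖ ≤ Nλ` for all groups `j`. Since the columns satisfy
`∑ᵢ (X_t)_{ij}² = n` and the tasks are independent, `‖(Xᵀw)^j‖²` is `nσ²` times a chi-square variable
with `T` degrees of freedom, and the choice of `λ` makes the complement of the event, for a given
`j`, equal to `χ²_T > 2T + 5u` with `u = (2A/5) log M`. Markov's inequality for `exp(χ²_T / 5)`, whose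
expectation is `(5/3)^{T/2} ≤ exp(2T/5)`, bounds that probability by `exp(-u) = M^{-2A/5}`
(`chi_tail`), and a union bound over `j` gives `noise_event`.

On the event put `Δ = b - βstar` and let `J` be the support of `βstar`. Comparing the objective at
`b` and at `βstar` yields `‖XΔ‖² + Nλ‖Δ‖_{2,1} ≤ 4Nλ ∑_{j ∈ J} ‖Δ^j‖` (`basic_inequality`). So `Δ` lies in
the cone of the restricted eigenvalue condition, and that condition together with Cauchy–Schwarz
on `J` gives the prediction and `(2,1)`-norm bounds. For the sparsity bound, optimality of `b` under
shrinking an active group `j` forces `‖(Xᵀ(y - Xb))^j‖ ≥ Nλ` (`kkt`), hence `‖(XᵀXΔ)^j‖ ≥ Nλ/2`; summing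
squares over the active groups and using `‖XᵀXΔ‖² ≤ nφ‖XΔ‖²` (`gram_bound`) bounds their number. For the
Euclidean bound, `J` is enlarged by the `s` groups of `Jᶜ` with largest `‖Δ^j‖`; the remaining tail is
at most `3` times the part on the enlarged set (`exists_tail`), to which the condition with `2s`
applies.
-/

open MeasureTheory ProbabilityTheory Finset

noncomputable section

namespace MultiTask

/-- The largest eigenvalue `φ_MT` of `XᵀX/n`, for the block-diagonal `X`, expressed as the
supremum of the quadratic form over unit vectors. -/
def phiMT {n M T : ℕ} (Xt : Fin T → Matrix (Fin n) (Fin M) ℝ) : ℝ :=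
  sSup {x | ∃ Δ : Fin T → Fin M → ℝ, (∑ t, ∑ j, (Δ t j) ^ 2 = 1) ∧ x = XnormSq Xt Δ / n}

/-! ### The noise event -/

theorem map_sum_gaussian {n : ℕ} (x : Fin n → ℝ) (v V : NNReal)
    (hV : (V : ℝ) = (∑ i, (x i) ^ 2) * v) :
    (Measure.pi fun _ : Fin n => gaussianReal 0 v).map (fun w => ∑ i, x i * w i) =
      gaussianReal 0 V := by
  have hm : Measurable (fun w : Fin n → ℝ => ∑ i, x i * w i) := by fun_prop
  have : IsProbabilityMeasure ((Measure.pi fun _ : Fin n => gaussianReal 0 v).map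
      (fun w => ∑ i, x i * w i)) := Measure.isProbabilityMeasure_map hm.aemeasurable
  apply Measure.ext_of_charFun
  ext t
  rw [charFun_apply_real, charFun_gaussianReal, integral_map hm.aemeasurable (by fun_prop)]
  have h : ∀ w : Fin n → ℝ, Complex.exp (t * ((∑ i, x i * w i : ℝ) : ℂ) * Complex.I) =
      ∏ i, Complex.exp (((t * x i : ℝ) : ℂ) * (w i : ℂ) * Complex.I) := by
    intro w
    rw [← Complex.exp_sum]
    congr 1
    push_cast
    rw [Finset.mul_sum, Finset.sum_mul]
    exact Finset.sum_congr rfl fun i _ => by ring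
  simp_rw [h]
  rw [integral_fintype_prod_eq_prod
    (f := fun i (y : ℝ) => Complex.exp (((t * x i : ℝ) : ℂ) * (y : ℂ) * Complex.I))]
  simp_rw [← charFun_apply_real, charFun_gaussianReal]
  rw [← Complex.exp_sum]
  congr 1
  have hVc : ((V : ℝ) : ℂ) = (∑ i, (x i : ℂ) ^ 2) * ((v : ℝ) : ℂ) := by
    rw [hV]
    push_cast
    rfl
  rw [hVc]
  push_cast
  simp only [mul_zero, zero_mul, zero_sub, Finset.sum_neg_distrib, Finset.sum_mul, Finset.sum_div]
  congr 1
  exact Finset.sum_congr rfl fun i _ => by ring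

/-- The factor `1/5` in the exponent is the one matching the constant `5/2` in the assumption on `A`. -/
theorem exp_sq_gaussian {v : NNReal} (hv : v ≠ 0) :
    Integrable (fun y : ℝ => Real.exp (y ^ 2 / (5 * v))) (gaussianReal 0 v) ∧
    ∫ y, Real.exp (y ^ 2 / (5 * v)) ∂(gaussianReal 0 v) = Real.sqrt (5 / 3) := by
  have hv' : (0 : ℝ) < v := by positivity
  have key : ∀ y : ℝ, gaussianPDFReal 0 v y * Real.exp (y ^ 2 / (5 * v)) =
      (Real.sqrt (2 * Real.pi * v))⁻¹ * Real.exp (-(3 / (10 * v)) * y ^ 2) := by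
    intro y
    rw [gaussianPDFReal, mul_assoc, ← Real.exp_add]
    congr 2
    field_simp
    ring
  constructor
  · rw [gaussianReal_of_var_ne_zero 0 hv,
      integrable_withDensity_iff_integrable_smul' (measurable_gaussianPDF 0 v)
        (Filter.Eventually.of_forall fun _ => gaussianPDF_lt_top)]
    simp only [toReal_gaussianPDF, smul_eq_mul, key]
    exact (integrable_exp_neg_mul_sq (by positivity)).const_mul _
  · rw [integral_gaussianReal_eq_integral_smul hv]
    simp only [smul_eq_mul, key]
    rw [integral_const_mul, integral_gaussian, ← Real.sqrt_inv, ← Real.sqrt_mul (by positivity)]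
    congr 1
    field_simp
    norm_num

/-- Chernoff bound `P(χ²_T ≥ 2T + 5u) ≤ exp(-u)`, where `χ²_T` is realised as the normalised sum over
`t` of the squares of the `N(0, nσ²)` variables `∑ᵢ x_{ti} w_{ti}`. -/
theorem chi_tail {n T : ℕ} (hn : 1 ≤ n) (x : Fin T → Fin n → ℝ)
    (hx : ∀ t, ∑ i, (x t i) ^ 2 = n) {σ : ℝ} (hσ : 0 < σ) (u : ℝ) :
    (Measure.pi fun _ : Fin T => Measure.pi fun _ : Fin n =>
      gaussianReal 0 (σ ^ 2).toNNReal).real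
      {w | n * σ ^ 2 * (2 * T + 5 * u) ≤ ∑ t, (∑ i, x t i * w t i) ^ 2} ≤ Real.exp (-u) := by
  set P := Measure.pi fun _ : Fin n => gaussianReal 0 (σ ^ 2).toNNReal with hP
  have hn' : (0 : ℝ) < n := by exact_mod_cast hn
  set V : NNReal := n * (σ ^ 2).toNNReal with hV
  have hVr : (V : ℝ) = n * σ ^ 2 := by
    simp [hV, Real.coe_toNNReal _ (sq_nonneg σ)]
  have hV0 : V ≠ 0 := by
    intro h
    rw [h] at hVr
    have : 0 < n * σ ^ 2 := by positivity
    simp at hVr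
    rcases hVr with h | h <;> [omega; exact hσ.ne' h]
  have hlaw : ∀ t, P.map (fun w => ∑ i, x t i * w i) = gaussianReal 0 V := by
    intro t
    exact map_sum_gaussian (x t) _ V (by rw [hx t, hVr, Real.coe_toNNReal _ (sq_nonneg σ)])
  obtain ⟨hi, hint⟩ := exp_sq_gaussian hV0
  have hm : ∀ t, Measurable (fun w : Fin n → ℝ => ∑ i, x t i * w i) := by intro t; fun_prop
  have hi' : ∀ t, Integrable (fun w : Fin n → ℝ => Real.exp ((∑ i, x t i * w i) ^ 2 / (5 * V))) P := by
    intro t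
    rw [← hlaw t] at hi
    exact hi.comp_measurable (hm t)
  have hint' : ∀ t, ∫ w : Fin n → ℝ, Real.exp ((∑ i, x t i * w i) ^ 2 / (5 * V)) ∂P
      = Real.sqrt (5 / 3) := by
    intro t
    rw [← hint, ← hlaw t, integral_map (hm t).aemeasurable (by fun_prop)]
  have hexp : ∀ w : Fin T → Fin n → ℝ, Real.exp ((∑ t, (∑ i, x t i * w t i) ^ 2) / (5 * V)) =
      ∏ t, Real.exp ((∑ i, x t i * w t i) ^ 2 / (5 * V)) := by
    intro w
    rw [← Real.exp_sum, Finset.sum_div]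
  have hI : Integrable (fun w : Fin T → Fin n → ℝ =>
      Real.exp ((∑ t, (∑ i, x t i * w t i) ^ 2) / (5 * V))) (Measure.pi fun _ => P) := by
    simp_rw [hexp]
    exact Integrable.fintype_prod
      (f := fun t (w : Fin n → ℝ) => Real.exp ((∑ i, x t i * w i) ^ 2 / (5 * V))) hi'
  have hE : ∫ w : Fin T → Fin n → ℝ,
      Real.exp ((∑ t, (∑ i, x t i * w t i) ^ 2) / (5 * V)) ∂(Measure.pi fun _ => P)
      = Real.sqrt (5 / 3) ^ T := by
    simp_rw [hexp]
    rw [integral_fintype_prod_eq_prod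
      (f := fun t (w : Fin n → ℝ) => Real.exp ((∑ i, x t i * w i) ^ 2 / (5 * V)))]
    simp only [hint', Finset.prod_const, Finset.card_univ, Fintype.card_fin]
  have hmk := mul_meas_ge_le_integral_of_nonneg
    (Filter.Eventually.of_forall fun w => (Real.exp_pos _).le) hI (Real.exp ((2 * T + 5 * u) / 5))
  rw [hE] at hmk
  have hset : {w : Fin T → Fin n → ℝ |
      n * σ ^ 2 * (2 * T + 5 * u) ≤ ∑ t, (∑ i, x t i * w t i) ^ 2} =
      {w | Real.exp ((2 * T + 5 * u) / 5) ≤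
        Real.exp ((∑ t, (∑ i, x t i * w t i) ^ 2) / (5 * V))} := by
    ext w
    have : 0 < n * σ ^ 2 := by positivity
    simp only [Set.mem_ofPred_eq, Real.exp_le_exp, hVr]
    rw [div_le_div_iff₀ (by norm_num) (by positivity)]
    constructor <;> intro h <;> nlinarith
  rw [hset]
  have h1 : Real.sqrt (5 / 3) ≤ Real.exp (2 / 5) := by
    refine le_trans ?_ (Real.add_one_le_exp _)
    rw [Real.sqrt_le_left (by norm_num)]
    norm_num
  have h2 : Real.sqrt (5 / 3) ^ T ≤ Real.exp (2 * T / 5) := by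
    refine (pow_le_pow_left₀ (Real.sqrt_nonneg _) h1 T).trans_eq ?_
    rw [← Real.exp_nat_mul]
    congr 1
    ring
  have h3 : Real.exp (2 * T / 5) = Real.exp ((2 * T + 5 * u) / 5) * Real.exp (-u) := by
    rw [← Real.exp_add]
    congr 1
    ring
  rw [h3] at h2
  exact le_of_mul_le_mul_left (hmk.trans h2) (Real.exp_pos _)

/-- The transpose of the block-diagonal design: `(Xᵀv)_{tj} = ∑ᵢ (X_t)_{ij} v_{ti}`. -/
def adj {n M T : ℕ} (Xt : Fin T → Matrix (Fin n) (Fin M) ℝ) (v : Fin T → Fin n → ℝ) :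
    Fin T → Fin M → ℝ :=
  fun t j => ∑ i, Xt t i j * v t i

/-- With the required probability, `λ` dominates the noise in every group: `2‖(Xᵀw)^j‖ ≤ nTλ`. -/
theorem noise_event {n M T : ℕ} (hM : 2 ≤ M) (hT : 1 ≤ T) (hn : 1 ≤ n)
    (Xt : Fin T → Matrix (Fin n) (Fin M) ℝ)
    (hdiag : ∀ t j, (∑ i, (Xt t i j) ^ 2) / n = 1)
    {Ω : Type*} [MeasurableSpace Ω] (μ : Measure Ω) [IsProbabilityMeasure μ]
    (W : Ω → Fin T → Fin n → ℝ) (σ : ℝ) (hσ : 0 < σ)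
    (hW : Measure.map W μ =
      Measure.pi fun _ : Fin T => Measure.pi fun _ : Fin n => gaussianReal 0 (σ ^ 2).toNNReal)
    (A : ℝ) (hA : 5 / 2 < A) (lam : ℝ)
    (hlam : lam = 2 * Real.sqrt 2 * σ / Real.sqrt (n * T) *
      Real.sqrt (1 + A * Real.log M / T)) :
    ∃ Ev : Set Ω, MeasurableSet Ev ∧
      1 - 2 * (M : ℝ) ^ ((1 : ℝ) - 2 * A / 5) ≤ (μ Ev).toReal ∧
      ∀ ω ∈ Ev, ∀ j, 2 * gnorm (adj Xt (W ω)) j ≤ n * T * lam := by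
  have hn' : (0 : ℝ) < n := by exact_mod_cast hn
  have hT' : (0 : ℝ) < T := by exact_mod_cast hT
  have hM' : (0 : ℝ) < M := by positivity
  have hlog : 0 ≤ Real.log M := Real.log_natCast_nonneg M
  have hWm : AEMeasurable W μ := by
    -- Otherwise `Measure.map W μ` is `0` by convention, which is not a probability measure.
    by_contra h
    rw [Measure.map_of_not_aemeasurable h] at hW
    have := congrArg (fun ν => ν Set.univ) hW
    simp at this
  set P := Measure.pi fun _ : Fin T => Measure.pi fun _ : Fin n =>
    gaussianReal 0 (σ ^ 2).toNNReal with hP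
  set u := 2 / 5 * A * Real.log M with hu
  set B : Fin M → Set (Fin T → Fin n → ℝ) := fun j =>
    {w | n * σ ^ 2 * (2 * T + 5 * u) ≤ ∑ t, (∑ i, Xt t i j * w t i) ^ 2} with hB
  have hBm : ∀ j, MeasurableSet (B j) := fun j =>
    measurableSet_le measurable_const (by fun_prop)
  have hBp : ∀ j, P.real (B j) ≤ Real.exp (-u) := by
    intro j
    refine chi_tail hn (fun t i => Xt t i j) (fun t => ?_) hσ u
    have := hdiag t j
    rwa [div_eq_one_iff_eq hn'.ne'] at this
  set G : Set (Fin T → Fin n → ℝ) := (⋃ j, B j)ᶜ with hG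
  have hGm : MeasurableSet G := (MeasurableSet.iUnion hBm).compl
  have hexp : (M : ℝ) * Real.exp (-u) = (M : ℝ) ^ ((1 : ℝ) - 2 * A / 5) := by
    rw [Real.rpow_sub hM', Real.rpow_one, Real.rpow_def_of_pos hM', Real.exp_neg, div_eq_mul_inv]
    congr 3
    rw [hu]
    ring
  have hGp : 1 - (M : ℝ) ^ ((1 : ℝ) - 2 * A / 5) ≤ P.real G := by
    rw [hG, probReal_compl_eq_one_sub (MeasurableSet.iUnion hBm), ← hexp]
    have h1 : P.real (⋃ j, B j) ≤ ∑ j, P.real (B j) := measureReal_iUnion_fintype_le B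
    have h2 : ∑ j, P.real (B j) ≤ ∑ _j : Fin M, Real.exp (-u) :=
      Finset.sum_le_sum fun j _ => hBp j
    simp only [Finset.sum_const, Finset.card_univ, Fintype.card_fin, nsmul_eq_mul] at h2
    linarith
  -- `W` is only almost everywhere measurable, so the event is a measurable subset of `W ⁻¹' G`
  -- of full measure.
  obtain ⟨Ev, hEvG, hEvm, hEvae⟩ :=
    (hWm.nullMeasurableSet_preimage hGm).exists_measurable_subset_ae_eq
  refine ⟨Ev, hEvm, ?_, fun ω hω j => ?_⟩
  · have h : (μ Ev).toReal = P.real G := by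
      rw [measure_congr hEvae, ← Measure.map_apply_of_aemeasurable hWm hGm, hW]
      rfl
    rw [h]
    have : 0 ≤ (M : ℝ) ^ ((1 : ℝ) - 2 * A / 5) := by positivity
    linarith
  · have h : W ω ∈ G := hEvG hω
    have hj : W ω ∉ B j := fun hj => h (Set.mem_iUnion.2 ⟨j, hj⟩)
    simp only [hB, Set.mem_ofPred_eq, not_le] at hj
    have hlam0 : 0 ≤ lam := by rw [hlam]; positivity
    have hlam2 : (n * T * lam) ^ 2 = 4 * (n * σ ^ 2 * (2 * T + 5 * u)) := by
      have e : (0 : ℝ) ≤ 1 + A * Real.log M / T := by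
        have : 0 ≤ A * Real.log M / T := by positivity
        linarith
      rw [hlam]
      simp only [mul_pow, div_pow, Real.sq_sqrt e, Real.sq_sqrt (by positivity : (0 : ℝ) ≤ n * T),
        Real.sq_sqrt (by norm_num : (0 : ℝ) ≤ 2)]
      rw [hu]
      field_simp
      ring
    have hg : 0 ≤ 2 * gnorm (adj Xt (W ω)) j := mul_nonneg zero_le_two (Real.sqrt_nonneg _)
    refine (pow_le_pow_iff_left₀ hg (by positivity) two_ne_zero).1 ?_
    rw [mul_pow, hlam2, gnorm, Real.sq_sqrt (Finset.sum_nonneg fun _ _ => sq_nonneg _)]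
    simp only [adj]
    linarith

/-! ### Group norms and the block-diagonal design -/

theorem gnorm_nonneg {M T : ℕ} (β : Fin T → Fin M → ℝ) (j : Fin M) : 0 ≤ gnorm β j :=
  Real.sqrt_nonneg _

theorem gnorm_sq {M T : ℕ} (β : Fin T → Fin M → ℝ) (j : Fin M) :
    gnorm β j ^ 2 = ∑ t, β t j ^ 2 :=
  Real.sq_sqrt (Finset.sum_nonneg fun _ _ => sq_nonneg _)

theorem gnorm_eq_norm {M T : ℕ} (β : Fin T → Fin M → ℝ) (j : Fin M) :
    gnorm β j = ‖WithLp.toLp 2 (fun t => β t j)‖ := by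
  simp [gnorm, EuclideanSpace.norm_eq]

theorem gnorm_add_le {M T : ℕ} (a b : Fin T → Fin M → ℝ) (j : Fin M) :
    gnorm (a + b) j ≤ gnorm a j + gnorm b j := by
  simp only [gnorm_eq_norm]
  exact norm_add_le (WithLp.toLp 2 fun t => a t j) (WithLp.toLp 2 fun t => b t j)

theorem gnorm_neg {M T : ℕ} (a : Fin T → Fin M → ℝ) (j : Fin M) :
    gnorm (-a) j = gnorm a j := by
  simp [gnorm]

theorem sum_gnorm_sq {M T : ℕ} (a : Fin T → Fin M → ℝ) :
    ∑ j, gnorm a j ^ 2 = ∑ t, ∑ j, a t j ^ 2 := by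
  simp only [gnorm_sq]
  exact Finset.sum_comm

theorem inner_le_gnorm {M T : ℕ} (a b : Fin T → Fin M → ℝ) (j : Fin M) :
    ∑ t, a t j * b t j ≤ gnorm a j * gnorm b j :=
  Real.sum_mul_le_sqrt_mul_sqrt _ _ _

/-- `⟨XD, v⟩ = ⟨D, Xᵀv⟩`. -/
theorem inner_adj {n M T : ℕ} (Xt : Fin T → Matrix (Fin n) (Fin M) ℝ) (D : Fin T → Fin M → ℝ)
    (v : Fin T → Fin n → ℝ) :
    ∑ t, ∑ i, (Xt t).mulVec (D t) i * v t i = ∑ j, ∑ t, D t j * adj Xt v t j := by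
  rw [Finset.sum_comm (s := (Finset.univ : Finset (Fin M)))]
  refine Finset.sum_congr rfl fun t _ => ?_
  simp only [Matrix.mulVec, dotProduct, adj, Finset.sum_mul, Finset.mul_sum]
  rw [Finset.sum_comm]
  exact Finset.sum_congr rfl fun j _ => Finset.sum_congr rfl fun i _ => by ring

theorem XnormSq_nonneg {n M T : ℕ} (Xt : Fin T → Matrix (Fin n) (Fin M) ℝ)
    (D : Fin T → Fin M → ℝ) : 0 ≤ XnormSq Xt D :=
  Finset.sum_nonneg fun _ _ => Finset.sum_nonneg fun _ _ => sq_nonneg _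

/-! ### Consequences of minimality -/

theorem mul_mtObj {n M T : ℕ} (hT : 1 ≤ T) (hn : 1 ≤ n)
    (Xt : Fin T → Matrix (Fin n) (Fin M) ℝ) (y : Fin T → Fin n → ℝ) (lam : ℝ)
    (β : Fin T → Fin M → ℝ) :
    n * T * mtObj Xt y lam β =
      ∑ t, ∑ i, ((Xt t).mulVec (β t) i - y t i) ^ 2 + 2 * (n * T * lam) * ∑ j, gnorm β j := by
  have hn' : (n : ℝ) ≠ 0 := by positivity
  have hT' : (T : ℝ) ≠ 0 := by positivity
  rw [mtObj, ← Finset.sum_div]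
  field_simp

/-- Along the line `b + εD` the residual sum of squares is a quadratic in `ε`. -/
theorem rss_line {n M T : ℕ} (Xt : Fin T → Matrix (Fin n) (Fin M) ℝ) (y : Fin T → Fin n → ℝ)
    (b D : Fin T → Fin M → ℝ) (ε : ℝ) :
    ∑ t, ∑ i, ((Xt t).mulVec ((b + ε • D) t) i - y t i) ^ 2 =
      ∑ t, ∑ i, ((Xt t).mulVec (b t) i - y t i) ^ 2
        - 2 * ε * ∑ j, ∑ t, D t j * adj Xt (fun t i => y t i - (Xt t).mulVec (b t) i) t j
        + ε ^ 2 * XnormSq Xt D := by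
  rw [← inner_adj, XnormSq]
  simp only [Finset.mul_sum, ← Finset.sum_sub_distrib, ← Finset.sum_add_distrib]
  refine Finset.sum_congr rfl fun t _ => Finset.sum_congr rfl fun i _ => ?_
  simp only [Pi.add_apply, Pi.smul_apply, Matrix.mulVec_add, Matrix.mulVec_smul, smul_eq_mul]
  ring

/-- Consequence of comparing the objective at `b` and at `βstar`. It contains both the bound on `‖XΔ‖²`
by the `ℓ₁` mass of `Δ` on the support of `βstar` and the cone condition. -/
theorem basic_inequality {n M T : ℕ} (hT : 1 ≤ T) (hn : 1 ≤ n)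
    (Xt : Fin T → Matrix (Fin n) (Fin M) ℝ) (βstar b : Fin T → Fin M → ℝ)
    (w : Fin T → Fin n → ℝ) (lam : ℝ)
    (hw : ∀ j, 2 * gnorm (adj Xt w) j ≤ n * T * lam)
    (hb : IsMTSol Xt (fun t i => (Xt t).mulVec (βstar t) i + w t i) lam b) :
    XnormSq Xt (b - βstar) + n * T * lam * ∑ j, gnorm (b - βstar) j ≤
      4 * (n * T * lam) *
        ∑ j ∈ Finset.univ.filter (fun j => gnorm βstar j ≠ 0), gnorm (b - βstar) j := by
  set L : ℝ := n * T * lam with hL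
  set Δ := b - βstar with hΔ
  have h := mul_le_mul_of_nonneg_left (hb βstar) (by positivity : (0 : ℝ) ≤ n * T)
  rw [mul_mtObj hT hn, mul_mtObj hT hn, ← hL] at h
  have hbeq : b = βstar + (1 : ℝ) • Δ := by rw [hΔ]; simp
  have hr := rss_line Xt (fun t i => (Xt t).mulVec (βstar t) i + w t i) βstar Δ 1
  rw [← hbeq] at hr
  rw [hr] at h
  simp only [add_sub_cancel_left] at h
  have h1 : ∑ j, 2 * ∑ t, Δ t j * adj Xt w t j ≤ ∑ j, L * gnorm Δ j := by
    refine Finset.sum_le_sum fun j _ => ?_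
    have := inner_le_gnorm Δ (adj Xt w) j
    nlinarith [gnorm_nonneg Δ j, hw j]
  rw [← Finset.mul_sum, ← Finset.mul_sum] at h1
  have h2 : ∑ j, (gnorm Δ j + gnorm βstar j - gnorm b j) ≤
      ∑ j ∈ Finset.univ.filter (fun j => gnorm βstar j ≠ 0), 2 * gnorm Δ j := by
    rw [Finset.sum_filter]
    refine Finset.sum_le_sum fun j _ => ?_
    split_ifs with hj
    · have := gnorm_add_le b (-Δ) j
      rw [gnorm_neg, show b + -Δ = βstar by rw [hΔ]; abel] at this
      linarith
    · have hj' : gnorm βstar j = 0 := not_not.1 hj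
      have := gnorm_add_le b (-βstar) j
      rw [gnorm_neg, ← sub_eq_add_neg, ← hΔ] at this
      linarith
  rw [Finset.sum_sub_distrib, Finset.sum_add_distrib, ← Finset.mul_sum] at h2
  rcases isEmpty_or_nonempty (Fin M) with hM | ⟨⟨j0⟩⟩
  · simp [Finset.univ_eq_empty] at h ⊢
    linarith
  have hL0 : 0 ≤ L := le_trans (by have := gnorm_nonneg (adj Xt w) j0; positivity) (hw j0)
  nlinarith [mul_le_mul_of_nonneg_left h2 hL0]

/-- First-order condition at an active group. Only optimality of `b` against shrinking the group `b^j`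
towards `0` is used, a direction in which the penalty is exactly linear. -/
theorem kkt {n M T : ℕ} (hT : 1 ≤ T) (hn : 1 ≤ n)
    (Xt : Fin T → Matrix (Fin n) (Fin M) ℝ) (y : Fin T → Fin n → ℝ) (lam : ℝ)
    (b : Fin T → Fin M → ℝ) (hb : IsMTSol Xt y lam b) (j : Fin M) (hj : gnorm b j ≠ 0) :
    n * T * lam ≤ gnorm (adj Xt (fun t i => y t i - (Xt t).mulVec (b t) i)) j := by
  set L : ℝ := n * T * lam with hL
  set a := adj Xt (fun t i => y t i - (Xt t).mulVec (b t) i) with ha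
  have hg : 0 < gnorm b j := lt_of_le_of_ne (gnorm_nonneg b j) (Ne.symm hj)
  set D : Fin T → Fin M → ℝ := fun t k => if k = j then -b t j else 0 with hD
  have hC := XnormSq_nonneg Xt D
  have hin : -∑ k, ∑ t, D t k * a t k ≤ gnorm b j * gnorm a j := by
    rw [Finset.sum_eq_single j (fun k _ hk => by simp [hD, hk]) (by simp)]
    simpa [hD] using inner_le_gnorm b a j
  have hnorm : ∀ ε : ℝ, 0 ≤ ε → ε ≤ 1 →
      ∑ k, gnorm (b + ε • D) k = ∑ k, gnorm b k - ε * gnorm b j := by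
    intro ε h0 h1
    have : ∀ k, gnorm (b + ε • D) k = gnorm b k - if k = j then ε * gnorm b j else 0 := by
      intro k
      split_ifs with hk
      · subst hk
        have : ∀ t, (b + ε • D) t k = (1 - ε) * b t k := by
          intro t
          simp [hD]
          ring
        simp only [gnorm, this, mul_pow, ← Finset.mul_sum]
        rw [Real.sqrt_mul (sq_nonneg _), Real.sqrt_sq (by linarith)]
        ring
      · simp [gnorm, hD, hk]
    simp [this, Finset.sum_sub_distrib]
  by_contra! hlt
  set δ := gnorm b j * (L - gnorm a j) with hδ
  have hδ0 : 0 < δ := mul_pos hg (by linarith)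
  -- A step `ε` small enough that the quadratic term cannot offset the linear gain `2εδ`.
  set ε := min 1 (δ / (XnormSq Xt D + 1)) with hε
  have hε0 : 0 < ε := lt_min one_pos (by positivity)
  have hεC : ε * XnormSq Xt D ≤ δ := by
    have : ε * (XnormSq Xt D + 1) ≤ δ := by
      rw [← le_div_iff₀ (by positivity)]
      exact min_le_right _ _
    nlinarith
  have h := mul_le_mul_of_nonneg_left (hb (b + ε • D)) (by positivity : (0 : ℝ) ≤ n * T)
  rw [mul_mtObj hT hn, mul_mtObj hT hn, ← hL, rss_line, hnorm ε hε0.le (min_le_left _ _), ← ha] at h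
  have h2 : ε * (2 * δ) ≤ ε * δ := by
    nlinarith [mul_le_mul_of_nonneg_left hin hε0.le, mul_le_mul_of_nonneg_left hεC hε0.le]
  nlinarith

/-! ### The largest eigenvalue -/

/-- The supremum defining `phiMT` is over a bounded set, so it does bound the quadratic form. -/
theorem XnormSq_le_phi {n M T : ℕ} (hn : 1 ≤ n)
    (Xt : Fin T → Matrix (Fin n) (Fin M) ℝ) (D : Fin T → Fin M → ℝ) :
    XnormSq Xt D ≤ n * phiMT Xt * ∑ t, ∑ j, D t j ^ 2 := by
  have hn' : (0 : ℝ) < n := by positivity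
  have hbound : ∀ E : Fin T → Fin M → ℝ,
      XnormSq Xt E ≤ (∑ t, ∑ i, ∑ j, Xt t i j ^ 2) * ∑ t, ∑ j, E t j ^ 2 := by
    intro E
    rw [XnormSq, Finset.sum_mul]
    refine Finset.sum_le_sum fun t _ => ?_
    rw [Finset.sum_mul]
    refine Finset.sum_le_sum fun i _ => ?_
    refine (Finset.sum_mul_sq_le_sq_mul_sq Finset.univ (fun j => Xt t i j)
      (fun j => E t j)).trans ?_
    refine mul_le_mul_of_nonneg_left ?_ (Finset.sum_nonneg fun _ _ => sq_nonneg _)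
    exact Finset.single_le_sum (f := fun t => ∑ j, E t j ^ 2)
      (fun t _ => Finset.sum_nonneg fun _ _ => sq_nonneg _) (Finset.mem_univ t)
  have hS0 : 0 ≤ ∑ t, ∑ j, D t j ^ 2 :=
    Finset.sum_nonneg fun _ _ => Finset.sum_nonneg fun _ _ => sq_nonneg _
  rcases hS0.eq_or_lt with hS | hS
  · have := hbound D
    rw [← hS] at this ⊢
    simpa using this
  set S := ∑ t, ∑ j, D t j ^ 2 with hSdef
  have hc2 : (Real.sqrt S)⁻¹ ^ 2 = S⁻¹ := by rw [inv_pow, Real.sq_sqrt hS.le]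
  have hbdd : BddAbove {x | ∃ Δ : Fin T → Fin M → ℝ,
      (∑ t, ∑ j, (Δ t j) ^ 2 = 1) ∧ x = XnormSq Xt Δ / n} := by
    refine ⟨(∑ t, ∑ i, ∑ j, Xt t i j ^ 2) / n, ?_⟩
    rintro x ⟨E, hE, rfl⟩
    have := hbound E
    rw [hE, mul_one] at this
    gcongr
  have hle : XnormSq Xt ((Real.sqrt S)⁻¹ • D) / n ≤ phiMT Xt := by
    refine le_csSup hbdd ⟨(Real.sqrt S)⁻¹ • D, ?_, rfl⟩
    simp only [Pi.smul_apply, smul_eq_mul, mul_pow, hc2, ← Finset.mul_sum]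
    rw [← hSdef]
    exact inv_mul_cancel₀ hS.ne'
  have hsc : XnormSq Xt ((Real.sqrt S)⁻¹ • D) = S⁻¹ * XnormSq Xt D := by
    simp only [XnormSq, Pi.smul_apply, Matrix.mulVec_smul, smul_eq_mul, mul_pow, hc2,
      ← Finset.mul_sum]
  rw [hsc, div_le_iff₀ hn', inv_mul_le_iff₀ hS] at hle
  linarith

/-- This includes the case of an empty unit sphere, where the supremum is `0` by convention. -/
theorem phi_nonneg {n M T : ℕ} (Xt : Fin T → Matrix (Fin n) (Fin M) ℝ) : 0 ≤ phiMT Xt := by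
  refine Real.sSup_nonneg ?_
  rintro x ⟨E, -, rfl⟩
  exact div_nonneg (XnormSq_nonneg Xt E) (Nat.cast_nonneg n)

/-- `‖XᵀXΔ‖² ≤ n φ ‖XΔ‖²`. With `u = XᵀXΔ` this is Cauchy–Schwarz,
`‖u‖² = ⟨Xu, XΔ⟩ ≤ ‖Xu‖ ‖XΔ‖`, together with `‖Xu‖² ≤ n φ ‖u‖²`. -/
theorem gram_bound {n M T : ℕ} (hn : 1 ≤ n)
    (Xt : Fin T → Matrix (Fin n) (Fin M) ℝ) (Δ : Fin T → Fin M → ℝ) :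
    ∑ j, gnorm (adj Xt (fun t i => (Xt t).mulVec (Δ t) i)) j ^ 2 ≤
      n * phiMT Xt * XnormSq Xt Δ := by
  set u := adj Xt (fun t i => (Xt t).mulVec (Δ t) i) with hu
  have hX := XnormSq_nonneg Xt Δ
  have hφ := phi_nonneg Xt
  set U := ∑ j, gnorm u j ^ 2 with hU
  have hU0 : 0 ≤ U := Finset.sum_nonneg fun _ _ => sq_nonneg _
  have h1 : U = ∑ t, ∑ i, (Xt t).mulVec (u t) i * (Xt t).mulVec (Δ t) i := by
    rw [inner_adj Xt u (fun t i => (Xt t).mulVec (Δ t) i), ← hu, hU]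
    simp only [gnorm_sq]
    simp only [sq]
  have h2 : U ^ 2 ≤ XnormSq Xt u * XnormSq Xt Δ := by
    rw [h1]
    simp only [XnormSq, ← Finset.sum_product']
    exact Finset.sum_mul_sq_le_sq_mul_sq _ _ _
  have h3 := XnormSq_le_phi hn Xt u
  rw [← sum_gnorm_sq, ← hU] at h3
  rcases hU0.eq_or_lt with h | h
  · rw [← h]; positivity
  · have h4 : U * U ≤ U * (n * phiMT Xt * XnormSq Xt Δ) := by
      nlinarith [mul_le_mul_of_nonneg_right h3 hX]
    exact le_of_mul_le_mul_left h4 h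

/-! ### Largest groups and their tail -/

theorem exists_top {ι : Type*} [DecidableEq ι] (g : ι → ℝ) (S : Finset ι) (m : ℕ)
    (hm : m ≤ S.card) :
    ∃ K ⊆ S, K.card = m ∧ ∀ k ∈ K, ∀ l ∈ S \ K, g l ≤ g k := by
  induction m with
  | zero => exact ⟨∅, by simp, rfl, by simp⟩
  | succ m ih =>
    obtain ⟨K, hKS, hK, htop⟩ := ih (by omega)
    have hne : (S \ K).Nonempty := by
      rw [← Finset.card_pos, Finset.card_sdiff_of_subset hKS]
      omega
    obtain ⟨a, ha, hmax⟩ := Finset.exists_max_image (S \ K) g hne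
    rw [Finset.mem_sdiff] at ha
    refine ⟨insert a K, Finset.insert_subset ha.1 hKS, by simp [ha.2, hK], ?_⟩
    intro k hk l hl
    have hl' : l ∈ S \ K := by
      simp only [Finset.mem_sdiff, Finset.mem_insert, not_or] at hl ⊢
      exact ⟨hl.1, hl.2.2⟩
    rcases Finset.mem_insert.1 hk with rfl | hk
    · exact hmax l hl'
    · exact htop k hk l hl'

/-- Removing the `s` largest values of `g` from a set leaves an `ℓ₂` tail controlled by the `ℓ₁`
norm on that set: each remaining value is at most the average of the `s` removed ones. -/
theorem exists_tail {ι : Type*} [DecidableEq ι] (g : ι → ℝ) (hg : ∀ i, 0 ≤ g i)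
    (S : Finset ι) (s : ℕ) :
    ∃ K ⊆ S, K.card ≤ s ∧ s * ∑ l ∈ S \ K, g l ^ 2 ≤ (∑ l ∈ S, g l) ^ 2 := by
  rcases le_total S.card s with h | h
  · exact ⟨S, subset_rfl, h, by simpa using sq_nonneg _⟩
  obtain ⟨K, hKS, hK, htop⟩ := exists_top g S s h
  refine ⟨K, hKS, hK.le, ?_⟩
  have hsum : ∀ l ∈ S \ K, s * g l ≤ ∑ l ∈ S, g l := by
    intro l hl
    calc s * g l = ∑ k ∈ K, g l := by simp [hK]
      _ ≤ ∑ k ∈ K, g k := Finset.sum_le_sum fun k hk => htop k hk l hl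
      _ ≤ ∑ l ∈ S, g l := Finset.sum_le_sum_of_subset_of_nonneg hKS fun i _ _ => hg i
  calc s * ∑ l ∈ S \ K, g l ^ 2 = ∑ l ∈ S \ K, (s * g l) * g l := by
        rw [Finset.mul_sum]
        exact Finset.sum_congr rfl fun l _ => by ring
    _ ≤ ∑ l ∈ S \ K, (∑ l ∈ S, g l) * g l :=
        Finset.sum_le_sum fun l hl => mul_le_mul_of_nonneg_right (hsum l hl) (hg l)
    _ = (∑ l ∈ S, g l) * ∑ l ∈ S \ K, g l := by rw [Finset.mul_sum]
    _ ≤ (∑ l ∈ S, g l) * ∑ l ∈ S, g l :=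
        mul_le_mul_of_nonneg_left
          (Finset.sum_le_sum_of_subset_of_nonneg Finset.sdiff_subset fun i _ _ => hg i)
          (Finset.sum_nonneg fun i _ => hg i)
    _ = _ := (sq _).symm

/-! ### The deterministic bounds -/

/-- Solving the two inequalities `κ²na² ≤ x ≤ 4nTλ·ra` for `a` and `x`; here `a` plays the role
of `‖Δ_J‖`, `x` that of `‖XΔ‖²`, and `r` that of `√s`. -/
theorem solve_bounds {n T lam κ a x r : ℝ} (hn : 0 < n) (hT : 0 < T) (hlam : 0 < lam)
    (ha : 0 ≤ a) (hr : 0 ≤ r) (h1 : κ ^ 2 * n * a ^ 2 ≤ x) (h2 : x ≤ 4 * (n * T * lam) * (r * a)) :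
    κ ^ 2 * a ≤ 4 * T * lam * r ∧ κ ^ 2 * x ≤ 16 * n * T ^ 2 * lam ^ 2 * r ^ 2 := by
  have ha' : κ ^ 2 * a ≤ 4 * T * lam * r := by
    rcases ha.eq_or_lt with h | h
    · rw [← h, mul_zero]
      positivity
    · refine le_of_mul_le_mul_left ?_ (mul_pos hn h)
      nlinarith
  refine ⟨ha', ?_⟩
  have h3 := mul_le_mul_of_nonneg_left h2 (sq_nonneg κ)
  have h4 := mul_le_mul_of_nonneg_left ha' (by positivity : 0 ≤ 4 * (n * T * lam) * r)
  nlinarith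

/-- The restricted eigenvalue condition in squared form, where `Δ = 0` need not be excluded. -/
theorem re_sq {n M T : ℕ} (Xt : Fin T → Matrix (Fin n) (Fin M) ℝ) (m : ℕ) (κ : ℝ) (hκ : 0 < κ)
    (hRE : ∀ J : Finset (Fin M), J.card ≤ m → ∀ Δ : Fin T → Fin M → ℝ, Δ ≠ 0 →
      (∑ j ∈ Jᶜ, gnorm Δ j) ≤ 3 * ∑ j ∈ J, gnorm Δ j →
      κ * Real.sqrt n * Real.sqrt (∑ j ∈ J, (gnorm Δ j) ^ 2) ≤ Real.sqrt (XnormSq Xt Δ))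
    (J : Finset (Fin M)) (hJ : J.card ≤ m) (Δ : Fin T → Fin M → ℝ)
    (hcone : (∑ j ∈ Jᶜ, gnorm Δ j) ≤ 3 * ∑ j ∈ J, gnorm Δ j) :
    κ ^ 2 * n * Real.sqrt (∑ j ∈ J, (gnorm Δ j) ^ 2) ^ 2 ≤ XnormSq Xt Δ := by
  by_cases hΔ : Δ = 0
  · subst hΔ
    simp [gnorm, XnormSq]
  · have h := pow_le_pow_left₀ (by positivity) (hRE J hJ Δ hΔ hcone) 2
    rwa [Real.sq_sqrt (XnormSq_nonneg Xt Δ), mul_pow, mul_pow,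
      Real.sq_sqrt (Nat.cast_nonneg n)] at h

theorem l1_le_l2 {M : ℕ} (g : Fin M → ℝ) (J : Finset (Fin M)) (s : ℕ) (hJ : J.card ≤ s) :
    ∑ j ∈ J, g j ≤ Real.sqrt s * Real.sqrt (∑ j ∈ J, g j ^ 2) := by
  rw [← Real.sqrt_mul (Nat.cast_nonneg s)]
  refine Real.le_sqrt_of_sq_le (sq_sum_le_card_mul_sum_sq.trans ?_)
  have : (J.card : ℝ) ≤ s := by exact_mod_cast hJ
  exact mul_le_mul_of_nonneg_right this (Finset.sum_nonneg fun _ _ => sq_nonneg _)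

/-- Deterministic part, in terms of `λ`: the four bounds hold for every noise `w` with
`2‖(Xᵀw)^j‖ ≤ nTλ` for all `j`. -/
theorem deterministic {n M T : ℕ} (hT : 1 ≤ T) (hn : 1 ≤ n)
    (Xt : Fin T → Matrix (Fin n) (Fin M) ℝ) (βstar b : Fin T → Fin M → ℝ)
    (w : Fin T → Fin n → ℝ) (lam : ℝ) (hlam : 0 < lam)
    (hw : ∀ j, 2 * gnorm (adj Xt w) j ≤ n * T * lam)
    (hb : IsMTSol Xt (fun t i => (Xt t).mulVec (βstar t) i + w t i) lam b)
    (s : ℕ) (hs : 1 ≤ s)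
    (hβs : (Finset.univ.filter (fun j => gnorm βstar j ≠ 0)).card ≤ s)
    (κ : ℝ) (hκ : 0 < κ)
    (hRE : ∀ J : Finset (Fin M), J.card ≤ s → ∀ Δ : Fin T → Fin M → ℝ, Δ ≠ 0 →
      (∑ j ∈ Jᶜ, gnorm Δ j) ≤ 3 * ∑ j ∈ J, gnorm Δ j →
      κ * Real.sqrt n * Real.sqrt (∑ j ∈ J, (gnorm Δ j) ^ 2) ≤ Real.sqrt (XnormSq Xt Δ)) :
    κ ^ 2 * XnormSq Xt (b - βstar) ≤ 16 * n * T ^ 2 * lam ^ 2 * s ∧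
    κ ^ 2 * ∑ j, gnorm (b - βstar) j ≤ 16 * T * lam * s ∧
    κ ^ 2 * ((Finset.univ.filter (fun j => gnorm b j ≠ 0)).card : ℝ) ≤ 64 * phiMT Xt * s ∧
    (∀ κ2s : ℝ, 0 < κ2s →
      (∀ J : Finset (Fin M), J.card ≤ 2 * s → ∀ Δ : Fin T → Fin M → ℝ, Δ ≠ 0 →
        (∑ j ∈ Jᶜ, gnorm Δ j) ≤ 3 * ∑ j ∈ J, gnorm Δ j →
        κ2s * Real.sqrt n * Real.sqrt (∑ j ∈ J, (gnorm Δ j) ^ 2) ≤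
          Real.sqrt (XnormSq Xt Δ)) →
      κ2s ^ 2 * Real.sqrt (∑ t, ∑ j, (b t j - βstar t j) ^ 2) ≤
        4 * Real.sqrt 10 * T * lam * Real.sqrt s) := by
  have hn' : (0 : ℝ) < n := by exact_mod_cast hn
  have hT' : (0 : ℝ) < T := by exact_mod_cast hT
  have hs' : (0 : ℝ) < s := by exact_mod_cast hs
  have hbasic := basic_inequality hT hn Xt βstar b w lam hw hb
  set J := Finset.univ.filter (fun j => gnorm βstar j ≠ 0) with hJ
  set Δ := b - βstar with hΔ
  set L : ℝ := n * T * lam with hL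
  have hL0 : 0 < L := by positivity
  have hx0 := XnormSq_nonneg Xt Δ
  have hg := gnorm_nonneg Δ
  have hs2 : Real.sqrt s ^ 2 = s := Real.sq_sqrt hs'.le
  have hsum : ∑ j, gnorm Δ j = ∑ j ∈ J, gnorm Δ j + ∑ j ∈ Jᶜ, gnorm Δ j :=
    (Finset.sum_add_sum_compl J _).symm
  have hl1 : ∑ j, gnorm Δ j ≤ 4 * ∑ j ∈ J, gnorm Δ j := by
    refine le_of_mul_le_mul_left ?_ hL0
    linarith
  have hcone : ∑ j ∈ Jᶜ, gnorm Δ j ≤ 3 * ∑ j ∈ J, gnorm Δ j := by linarith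
  have hxJ : XnormSq Xt Δ ≤ 4 * L * ∑ j ∈ J, gnorm Δ j := by
    have : 0 ≤ L * ∑ j, gnorm Δ j := mul_nonneg hL0.le (Finset.sum_nonneg fun j _ => hg j)
    linarith
  have hJ12 := l1_le_l2 (gnorm Δ) J s hβs
  obtain ⟨ha, hx⟩ := solve_bounds hn' hT' hlam (Real.sqrt_nonneg _) (Real.sqrt_nonneg s)
    (re_sq Xt s κ hκ hRE J hβs Δ hcone) (hxJ.trans (mul_le_mul_of_nonneg_left hJ12 (by positivity)))
  rw [hs2] at hx
  refine ⟨hx, ?_, ?_, fun κ2s hκ2 hRE2 => ?_⟩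
  · have h1 := mul_le_mul_of_nonneg_left ha (Real.sqrt_nonneg s)
    have h2 := mul_le_mul_of_nonneg_left (hl1.trans (mul_le_mul_of_nonneg_left hJ12 (by norm_num)))
      (sq_nonneg κ)
    nlinarith
  · set S := Finset.univ.filter (fun j => gnorm b j ≠ 0) with hS
    have hact : ∀ j ∈ S, L / 2 ≤ gnorm (adj Xt (fun t i => (Xt t).mulVec (Δ t) i)) j := by
      intro j hj
      have hk := kkt hT hn Xt _ lam b hb j (Finset.mem_filter.1 hj).2
      have he : adj Xt (fun t i => (Xt t).mulVec (βstar t) i + w t i - (Xt t).mulVec (b t) i) =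
          adj Xt w + -adj Xt (fun t i => (Xt t).mulVec (Δ t) i) := by
        ext t j
        simp only [adj, Pi.add_apply, Pi.neg_apply, ← Finset.sum_neg_distrib,
          ← Finset.sum_add_distrib, hΔ, Pi.sub_apply, Matrix.mulVec_sub]
        exact Finset.sum_congr rfl fun i _ => by ring
      rw [he] at hk
      have := gnorm_add_le (adj Xt w) (-adj Xt (fun t i => (Xt t).mulVec (Δ t) i)) j
      rw [gnorm_neg] at this
      linarith [hw j]
    have hcard : (S.card : ℝ) * (L / 2) ^ 2 ≤ n * phiMT Xt * XnormSq Xt Δ := by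
      calc (S.card : ℝ) * (L / 2) ^ 2 = ∑ _j ∈ S, (L / 2) ^ 2 := by simp
        _ ≤ ∑ j ∈ S, gnorm (adj Xt (fun t i => (Xt t).mulVec (Δ t) i)) j ^ 2 :=
            Finset.sum_le_sum fun j hj => pow_le_pow_left₀ (by positivity) (hact j hj) 2
        _ ≤ ∑ j, gnorm (adj Xt (fun t i => (Xt t).mulVec (Δ t) i)) j ^ 2 :=
            Finset.sum_le_sum_of_subset_of_nonneg (Finset.subset_univ _) fun _ _ _ => sq_nonneg _
        _ ≤ _ := gram_bound hn Xt Δ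
    have h1 := mul_le_mul_of_nonneg_left hcard (sq_nonneg κ)
    have h2 := mul_le_mul_of_nonneg_left hx (mul_nonneg hn'.le (phi_nonneg Xt))
    refine le_of_mul_le_mul_left ?_ (by positivity : 0 < (L / 2) ^ 2)
    have e : n * phiMT Xt * (16 * n * T ^ 2 * lam ^ 2 * s) =
        (L / 2) ^ 2 * (64 * phiMT Xt * s) := by
      rw [hL]
      ring
    linarith
  · obtain ⟨K, hKJ, hKs, htail⟩ := exists_tail (gnorm Δ) hg Jᶜ s
    set J' := J ∪ K with hJ'
    have hJ'c : J'ᶜ = Jᶜ \ K := by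
      rw [hJ', Finset.compl_union]
      ext
      simp
    have hJ'card : J'.card ≤ 2 * s := (Finset.card_union_le J K).trans (by omega)
    have hmono : ∑ j ∈ J, gnorm Δ j ≤ ∑ j ∈ J', gnorm Δ j :=
      Finset.sum_le_sum_of_subset_of_nonneg Finset.subset_union_left fun j _ _ => hg j
    have hmono2 : ∑ j ∈ J, gnorm Δ j ^ 2 ≤ ∑ j ∈ J', gnorm Δ j ^ 2 :=
      Finset.sum_le_sum_of_subset_of_nonneg Finset.subset_union_left fun j _ _ => sq_nonneg _
    have hcone' : ∑ j ∈ J'ᶜ, gnorm Δ j ≤ 3 * ∑ j ∈ J', gnorm Δ j := by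
      have : ∑ j ∈ J'ᶜ, gnorm Δ j ≤ ∑ j ∈ Jᶜ, gnorm Δ j := by
        rw [hJ'c]
        exact Finset.sum_le_sum_of_subset_of_nonneg Finset.sdiff_subset fun j _ _ => hg j
      linarith
    have hJ12' : ∑ j ∈ J, gnorm Δ j ≤ Real.sqrt s * Real.sqrt (∑ j ∈ J', gnorm Δ j ^ 2) :=
      hJ12.trans (mul_le_mul_of_nonneg_left (Real.sqrt_le_sqrt hmono2) (Real.sqrt_nonneg _))
    obtain ⟨ha', -⟩ := solve_bounds hn' hT' hlam (Real.sqrt_nonneg _) (Real.sqrt_nonneg s)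
      (re_sq Xt (2 * s) κ2s hκ2 hRE2 J' hJ'card Δ hcone')
      (hxJ.trans (mul_le_mul_of_nonneg_left hJ12' (by positivity)))
    have hP0 : 0 ≤ ∑ j ∈ J', gnorm Δ j ^ 2 := Finset.sum_nonneg fun _ _ => sq_nonneg _
    have htail' : ∑ j ∈ J'ᶜ, gnorm Δ j ^ 2 ≤ 9 * ∑ j ∈ J', gnorm Δ j ^ 2 := by
      rw [hJ'c]
      refine le_of_mul_le_mul_left (htail.trans ?_) hs'
      have h1 : ∑ j ∈ Jᶜ, gnorm Δ j ≤
          3 * (Real.sqrt s * Real.sqrt (∑ j ∈ J', gnorm Δ j ^ 2)) := by linarith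
      have h2 := pow_le_pow_left₀ (Finset.sum_nonneg fun j _ => hg j) h1 2
      rw [mul_pow, mul_pow, hs2, Real.sq_sqrt hP0] at h2
      linarith
    have htot : ∑ t, ∑ j, (b t j - βstar t j) ^ 2 ≤ 10 * ∑ j ∈ J', gnorm Δ j ^ 2 := by
      have h1 : ∑ j, gnorm Δ j ^ 2 = ∑ t, ∑ j, (b t j - βstar t j) ^ 2 := sum_gnorm_sq Δ
      rw [← h1, ← Finset.sum_add_sum_compl J']
      linarith
    have h3 := Real.sqrt_le_sqrt htot
    rw [Real.sqrt_mul (by norm_num)] at h3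
    have h4 := mul_le_mul_of_nonneg_left h3 (sq_nonneg κ2s)
    have h5 := mul_le_mul_of_nonneg_left ha' (Real.sqrt_nonneg 10)
    linarith

/-- oracle inequalities for the multi-task Group Lasso under the restricted
eigenvalue assumption RE-MT(s); if in addition RE-MT(2s) holds with constant `κ2s > 0`, the
`ℓ₂` bound (iv) also holds, with the same probability. -/
theorem multitask_oracle_inequalities
    {n M T : ℕ} (hM : 2 ≤ M) (hT : 1 ≤ T) (hn : 1 ≤ n)
    (Xt : Fin T → Matrix (Fin n) (Fin M) ℝ)
    (hdiag : ∀ t j, (∑ i, (Xt t i j) ^ 2) / n = 1)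
    (βstar : Fin T → Fin M → ℝ)
    {Ω : Type*} [MeasurableSpace Ω] (μ : Measure Ω) [IsProbabilityMeasure μ]
    (W : Ω → Fin T → Fin n → ℝ) (σ : ℝ) (hσ : 0 < σ)
    (hW : Measure.map W μ =
      Measure.pi fun _ : Fin T => Measure.pi fun _ : Fin n => gaussianReal 0 (σ ^ 2).toNNReal)
    (A : ℝ) (hA : 5 / 2 < A) (lam : ℝ)
    (hlam : lam = 2 * Real.sqrt 2 * σ / Real.sqrt (n * T) *
      Real.sqrt (1 + A * Real.log M / T))
    (s : ℕ) (hs : 1 ≤ s)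
    (hβs : (Finset.univ.filter (fun j => gnorm βstar j ≠ 0)).card ≤ s)
    (κ : ℝ) (hκ : 0 < κ)
    (hRE : ∀ J : Finset (Fin M), J.card ≤ s → ∀ Δ : Fin T → Fin M → ℝ, Δ ≠ 0 →
      (∑ j ∈ Jᶜ, gnorm Δ j) ≤ 3 * ∑ j ∈ J, gnorm Δ j →
      κ * Real.sqrt n * Real.sqrt (∑ j ∈ J, (gnorm Δ j) ^ 2) ≤ Real.sqrt (XnormSq Xt Δ)) :
    ∃ Ev : Set Ω, MeasurableSet Ev ∧
      1 - 2 * (M : ℝ) ^ ((1 : ℝ) - 2 * A / 5) ≤ (μ Ev).toReal ∧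
      ∀ ω ∈ Ev, ∀ b : Fin T → Fin M → ℝ,
        IsMTSol Xt (fun t i => (Xt t).mulVec (βstar t) i + W ω t i) lam b →
        (XnormSq Xt (b - βstar) / (n * T) ≤
            128 * σ ^ 2 / κ ^ 2 * (s / n) * (1 + A * Real.log M / T)) ∧
        ((1 / Real.sqrt T) * ∑ j, gnorm (b - βstar) j ≤
            32 * Real.sqrt 2 * σ / κ ^ 2 * (s / Real.sqrt n) *
              Real.sqrt (1 + A * Real.log M / T)) ∧
        (((Finset.univ.filter (fun j => gnorm b j ≠ 0)).card : ℝ) ≤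
            64 * phiMT Xt / κ ^ 2 * s) ∧
        (∀ κ2s : ℝ, 0 < κ2s →
          (∀ J : Finset (Fin M), J.card ≤ 2 * s → ∀ Δ : Fin T → Fin M → ℝ, Δ ≠ 0 →
            (∑ j ∈ Jᶜ, gnorm Δ j) ≤ 3 * ∑ j ∈ J, gnorm Δ j →
            κ2s * Real.sqrt n * Real.sqrt (∑ j ∈ J, (gnorm Δ j) ^ 2) ≤
              Real.sqrt (XnormSq Xt Δ)) →
          (1 / Real.sqrt T) * Real.sqrt (∑ t, ∑ j, (b t j - βstar t j) ^ 2) ≤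
            16 * Real.sqrt 5 * σ / κ2s ^ 2 * Real.sqrt (s / n) *
              Real.sqrt (1 + A * Real.log M / T)) := by
  have hn' : (0 : ℝ) < n := by exact_mod_cast hn
  have hT' : (0 : ℝ) < T := by exact_mod_cast hT
  have hlog : 0 ≤ Real.log M := Real.log_natCast_nonneg M
  have hR0 : 0 < 1 + A * Real.log M / T := by
    have : 0 ≤ A * Real.log M / T := by positivity
    linarith
  obtain ⟨Ev, hEvm, hEvp, hEv⟩ := noise_event hM hT hn Xt hdiag μ W σ hσ hW A hA lam hlam
  refine ⟨Ev, hEvm, hEvp, fun ω hω b hb => ?_⟩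
  set R := 1 + A * Real.log M / T with hR
  have hlam0 : 0 < lam := by rw [hlam]; positivity
  obtain ⟨h1, h2, h3, h4⟩ := deterministic hT hn Xt βstar b (W ω) lam hlam0 (hEv ω hω) hb s hs hβs
    κ hκ hRE
  have hsn : 0 < Real.sqrt n := Real.sqrt_pos.2 hn'
  have hsT : 0 < Real.sqrt T := Real.sqrt_pos.2 hT'
  have hTT : Real.sqrt T * Real.sqrt T = T := Real.mul_self_sqrt hT'.le
  rw [Real.sqrt_mul hn'.le] at hlam
  have hlamT : T * lam = Real.sqrt T * (2 * Real.sqrt 2 * σ / Real.sqrt n * Real.sqrt R) := by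
    rw [hlam]
    nth_rewrite 1 [← hTT]
    field_simp
  have hlam2 : T * lam ^ 2 = 8 * σ ^ 2 / n * R := by
    rw [hlam]
    simp only [mul_pow, div_pow, Real.sq_sqrt hR0.le, Real.sq_sqrt hn'.le, Real.sq_sqrt hT'.le,
      Real.sq_sqrt (by norm_num : (0 : ℝ) ≤ 2)]
    field_simp
    norm_num
  refine ⟨?_, ?_, ?_, fun κ2s hκ2 hRE2 => ?_⟩
  · rw [div_le_iff₀ (by positivity)]
    have e : 128 * σ ^ 2 / κ ^ 2 * (s / n) * R * (n * T) =
        (16 * n * T ^ 2 * lam ^ 2 * s) / κ ^ 2 := by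
      have : 16 * n * T ^ 2 * lam ^ 2 * s = 16 * n * T * (T * lam ^ 2) * s := by ring
      rw [this, hlam2]
      field_simp
      norm_num
    rw [e, le_div_iff₀ (by positivity)]
    linarith
  · rw [one_div, inv_mul_le_iff₀ hsT]
    have e : Real.sqrt T * (32 * Real.sqrt 2 * σ / κ ^ 2 * (s / Real.sqrt n) * Real.sqrt R) =
        (16 * T * lam * s) / κ ^ 2 := by
      have : 16 * T * lam * s = 16 * (T * lam) * s := by ring
      rw [this, hlamT]
      field_simp
      norm_num
    rw [e, le_div_iff₀ (by positivity)]
    linarith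
  · have e : 64 * phiMT Xt / κ ^ 2 * s = (64 * phiMT Xt * s) / κ ^ 2 := by ring
    rw [e, le_div_iff₀ (by positivity)]
    linarith
  · have h := h4 κ2s hκ2 hRE2
    rw [one_div, inv_mul_le_iff₀ hsT]
    have h10 : Real.sqrt 10 * Real.sqrt 2 = 2 * Real.sqrt 5 := by
      rw [← Real.sqrt_mul (by norm_num), show (10 : ℝ) * 2 = 2 ^ 2 * 5 by norm_num,
        Real.sqrt_mul (by norm_num), Real.sqrt_sq (by norm_num)]
    have e : Real.sqrt T * (16 * Real.sqrt 5 * σ / κ2s ^ 2 * Real.sqrt (s / n) * Real.sqrt R) =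
        (4 * Real.sqrt 10 * T * lam * Real.sqrt s) / κ2s ^ 2 := by
      have : 4 * Real.sqrt 10 * T * lam * Real.sqrt s =
        8 * (Real.sqrt 10 * Real.sqrt 2) * Real.sqrt T * σ / Real.sqrt n * Real.sqrt R
          * Real.sqrt s := by
        calc _ = 4 * Real.sqrt 10 * (T * lam) * Real.sqrt s := by ring
          _ = _ := by rw [hlamT]; ring
      rw [this, h10, Real.sqrt_div (Nat.cast_nonneg s)]
      ring
    rw [e, le_div_iff₀ (by positivity)]
    linarith

end MultiTask
end
end
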